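/- arXiv:2106.01737 — 3 statements merged into one kernel-verified Lean document; each statement's English description precedes it below -/
import Mathlib

section
/- Let β ∈ [1,2), (c,b) ∈ C(β), and ε > 0. Then there exist K ∈ ℕ and a K-feasible pair (c̃,b) ∈ C^{≤K}(β) such that for every sequence α̃ : ℕ → [0,1] with ∑_{i=0}^∞ α̃_i·c̃_i/2^i = 1/(β·2^{b+1}) there exists a sequence α : ℕ → [0,1] with ∑_{i=0}^∞ α_i·c_i/2^i = 1/(β·2^{b+1}) and |P(c̃,α̃) − P(c,α)| ≤ ε. -/
/-- The binary entropy function, `h(p) = p log₂(1/p) + (1-p) log₂(1/(1-p))`,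
with the convention `h(0) = h(1) = 0` (automatic since `1/0 = 0` and `logb 2 0 = 0`). -/
noncomputable def binH (p : ℝ) : ℝ :=
  p * Real.logb 2 (1 / p) + (1 - p) * Real.logb 2 (1 / (1 - p))

/-- `(c, b) ∈ C(β)`: `c : ℕ → [0,1]`, `∑ cᵢ/2ⁱ = 1/(β·2ᵇ)` and `∑ cᵢ ≤ 1`
(the latter expressed via partial sums, which is equivalent for nonnegative terms). -/
def memC (β : ℝ) (c : ℕ → ℝ) (b : ℕ) : Prop :=
  (∀ i, c i ∈ Set.Icc (0 : ℝ) 1) ∧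
  (∑' i : ℕ, c i / 2 ^ i) = 1 / (β * 2 ^ b) ∧
  ∀ n : ℕ, (∑ i ∈ Finset.range n, c i) ≤ 1

/-- `α ∈ A(c,b)`: `α : ℕ → [0,1]` with `∑ αᵢ cᵢ / 2ⁱ = 1/(β·2^{b+1})`. -/
def memA (β : ℝ) (b : ℕ) (c α : ℕ → ℝ) : Prop :=
  (∀ i, α i ∈ Set.Icc (0 : ℝ) 1) ∧
  (∑' i : ℕ, α i * c i / 2 ^ i) = 1 / (β * 2 ^ (b + 1))

/-- `P(c,α) = ∑ h(αᵢ)·cᵢ − h(∑ αᵢ·cᵢ)`. -/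
noncomputable def Pfun (c α : ℕ → ℝ) : ℝ :=
  (∑' i : ℕ, binH (α i) * c i) - binH (∑' i : ℕ, α i * c i)

/-- `sup_{α ∈ A(c,b)} P(c,α)`. -/
noncomputable def supP (β : ℝ) (b : ℕ) (c : ℕ → ℝ) : ℝ :=
  sSup {y | ∃ α, memA β b c α ∧ y = Pfun c α}

/-- `G(β) = inf_{(c,b) ∈ C(β)} sup_{α ∈ A(c,b)} P(c,α)`. -/
noncomputable def Gfun (β : ℝ) : ℝ :=
  sInf {y | ∃ c b, memC β c b ∧ y = supP β b c}

/-- `(c,b)` is `k`-feasible: `cᵢ · β · 2ᵏ ∈ ℕ` for every `i`. -/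
def kFeasC (β : ℝ) (k : ℕ) (c : ℕ → ℝ) : Prop :=
  ∀ i, ∃ m : ℕ, c i * (β * 2 ^ k) = m

/-- `α` is `k`-feasible (for `c`): `αᵢ · cᵢ · β · 2ᵏ ∈ ℕ` for every `i`, and if there is
a largest index `t` with `c t > 0` then `α t < 1`. -/
def kFeasA (β : ℝ) (k : ℕ) (c α : ℕ → ℝ) : Prop :=
  (∀ i, ∃ m : ℕ, α i * c i * (β * 2 ^ k) = m) ∧
  (∀ t, 0 < c t → (∀ i, t < i → c i = 0) → α t < 1)

theorem binH_eq_binEntropy_div (p : ℝ) : binH p = Real.binEntropy p / Real.log 2 := by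
  simp only [binH, Real.binEntropy, Real.logb, one_div]
  ring

theorem continuous_binH : Continuous binH := by
  rw [funext binH_eq_binEntropy_div]
  exact Real.binEntropy_continuous.div_const _

theorem abs_binH_le_one {p : ℝ} (hp : p ∈ Set.Icc (0 : ℝ) 1) : |binH p| ≤ 1 := by
  have hlog : 0 < Real.log 2 := Real.log_pos one_lt_two
  rw [binH_eq_binEntropy_div, abs_of_nonneg (div_nonneg (Real.binEntropy_nonneg hp.1 hp.2) hlog.le),
    div_le_one hlog]
  exact Real.binEntropy_le_log_two

theorem exists_binH_modulus {ε : ℝ} (hε : 0 < ε) :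
    ∃ δ > 0, ∀ x ∈ Set.Icc (0 : ℝ) 1, ∀ y ∈ Set.Icc (0 : ℝ) 1, |x - y| < δ →
      |binH x - binH y| < ε := by
  have h := isCompact_Icc.uniformContinuousOn_of_continuous
    (continuous_binH.continuousOn (s := Set.Icc (0 : ℝ) 1))
  rw [Metric.uniformContinuousOn_iff] at h
  exact h ε hε

theorem Summable.mul_of_abs_le_one {x v : ℕ → ℝ} (hx : ∀ i, |x i| ≤ 1) (hv : Summable v) :
    Summable fun i => x i * v i := by
  refine Summable.of_norm_bounded hv.abs fun i => ?_
  rw [Real.norm_eq_abs, abs_mul]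
  exact mul_le_of_le_one_left (abs_nonneg _) (hx i)

theorem Summable.div_two_pow {v : ℕ → ℝ} (hv : Summable v) :
    Summable fun i => v i / 2 ^ i := by
  have h : Summable fun i => (1 / 2 ^ i : ℝ) * v i := by
    refine hv.mul_of_abs_le_one fun i => ?_
    rw [abs_of_nonneg (by positivity)]
    exact div_le_one_of_le₀ (one_le_pow₀ one_le_two) (by positivity)
  exact h.congr fun i => by ring

/-- Changing both the bounded factor and the weights of a weighted sum. -/
theorem abs_tsum_mul_sub_tsum_mul_le {x y u v : ℕ → ℝ} {t : ℝ}
    (hx : ∀ i, |x i| ≤ 1) (hy : ∀ i, |y i| ≤ 1) (hxy : ∀ i, |x i - y i| ≤ t)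
    (hu : Summable u) (hv : Summable v) (hv0 : ∀ i, 0 ≤ v i) (hv1 : ∑' i, v i ≤ 1) :
    |∑' i, x i * u i - ∑' i, y i * v i| ≤ ∑' i, |u i - v i| + t := by
  have ht : 0 ≤ t := (abs_nonneg _).trans (hxy 0)
  have hs : Summable fun i => |u i - v i| := (hu.sub hv).abs
  have hb : Summable fun i => |u i - v i| + t * v i := hs.add (hv.mul_left t)
  rw [← (hu.mul_of_abs_le_one hx).tsum_sub (hv.mul_of_abs_le_one hy)]
  calc |∑' i, (x i * u i - y i * v i)| ≤ ∑' i, (|u i - v i| + t * v i) := by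
        refine tsum_of_norm_bounded (E := ℝ) hb.hasSum fun i => ?_
        rw [Real.norm_eq_abs]
        calc |x i * u i - y i * v i| = |x i * (u i - v i) + (x i - y i) * v i| := by ring_nf
          _ ≤ |x i * (u i - v i)| + |(x i - y i) * v i| := abs_add_le _ _
          _ ≤ |u i - v i| + t * v i := by
            rw [abs_mul, abs_mul, abs_of_nonneg (hv0 i)]
            exact add_le_add (mul_le_of_le_one_left (abs_nonneg _) (hx i))
              (mul_le_mul_of_nonneg_right (hxy i) (hv0 i))
    _ = ∑' i, |u i - v i| + t * ∑' i, v i := by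
        rw [hs.tsum_add (hv.mul_left t), tsum_mul_left]
    _ ≤ _ := by nlinarith

/-- A fractional selection of nearly half of the total weight can be perturbed to one of exactly
half. -/
theorem exists_half_weight_near {w a : ℕ → ℝ} {η : ℝ} (hw : Summable w)
    (ha : ∀ i, a i ∈ Set.Icc (0 : ℝ) 1) (hS : 0 < ∑' i, w i)
    (hη : |∑' i, a i * w i - (∑' i, w i) / 2| ≤ η) :
    ∃ α : ℕ → ℝ, (∀ i, α i ∈ Set.Icc (0 : ℝ) 1) ∧ ∑' i, α i * w i = (∑' i, w i) / 2 ∧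
      ∀ i, |α i - a i| ≤ 2 * η / ∑' i, w i := by
  have haw : Summable fun i => a i * w i := by
    refine hw.mul_of_abs_le_one fun i => ?_
    rw [abs_of_nonneg (ha i).1]
    exact (ha i).2
  set S := ∑' i, w i
  set T := ∑' i, a i * w i
  obtain ⟨e, t, he, ht0, ht1, htη, hte⟩ : ∃ e t : ℝ, e ∈ Set.Icc (0 : ℝ) 1 ∧ 0 ≤ t ∧ t ≤ 1 ∧
      t ≤ 2 * η / S ∧ (1 - t) * T + t * e * S = S / 2 := by
    rw [abs_le] at hη
    rcases le_total (S / 2) T with h | h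
    · have hT : 0 < T := by linarith
      refine ⟨0, (T - S / 2) / T, by simp, div_nonneg (by linarith) hT.le, ?_, ?_, ?_⟩
      · rw [div_le_one hT]; linarith
      · rw [div_le_div_iff₀ hT hS]; nlinarith
      · field_simp; ring
    · have hT : 0 < S - T := by linarith
      refine ⟨1, (S / 2 - T) / (S - T), by simp, div_nonneg (by linarith) hT.le, ?_, ?_, ?_⟩
      · rw [div_le_one hT]; linarith
      · rw [div_le_div_iff₀ hT hS]; nlinarith
      · field_simp; ring
  refine ⟨fun i => (1 - t) * a i + t * e, fun i => ?_, ?_, fun i => le_trans ?_ htη⟩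
  · exact convex_Icc (0 : ℝ) 1 (ha i) he (sub_nonneg.2 ht1) ht0 (by ring)
  · have h : (fun i => ((1 - t) * a i + t * e) * w i) =
        fun i => (1 - t) * (a i * w i) + t * e * w i := by ext i; ring
    rw [h, (haw.mul_left _).tsum_add (hw.mul_left _), tsum_mul_left, tsum_mul_left]
    exact hte
  · have h : |e - a i| ≤ 1 := by
      rw [abs_le]
      constructor <;> linarith [he.1, he.2, (ha i).1, (ha i).2]
    calc |(1 - t) * a i + t * e - a i| = t * |e - a i| := by
          rw [← abs_of_nonneg ht0, ← abs_mul, abs_of_nonneg ht0]; ring_nf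
      _ ≤ t := mul_le_of_le_one_right ht0 h

theorem memC.summable {β : ℝ} {c : ℕ → ℝ} {b : ℕ} (hC : memC β c b) : Summable c :=
  summable_of_sum_range_le (fun i => (hC.1 i).1) hC.2.2

theorem memC.tsum_le_one {β : ℝ} {c : ℕ → ℝ} {b : ℕ} (hC : memC β c b) : ∑' i, c i ≤ 1 :=
  Real.tsum_le_of_sum_range_le (fun i => (hC.1 i).1) hC.2.2

/-- Rounding down to the grid `ℕ / (β 2ᵏ)` and truncating, then moving the lost weight to
index `0`. -/
theorem exists_feasible_near {β : ℝ} (hβ : 1 ≤ β) {c : ℕ → ℝ} {b : ℕ} (hC : memC β c b)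
    {η : ℝ} (hη : 0 < η) :
    ∃ K : ℕ, ∃ ct : ℕ → ℝ, memC β ct b ∧ (∀ i, K < i → ct i = 0) ∧ kFeasC β K ct ∧
      ∑' i, |ct i - c i| ≤ η := by
  have hβ0 : 0 < β := by linarith
  have hc := hC.summable
  have hc0 : ∀ i, 0 ≤ c i := fun i => (hC.1 i).1
  obtain ⟨l, hl⟩ : ∃ l, ∑' i, c (i + l) < η / 4 :=
    ((tendsto_sum_nat_add c).eventually_lt_const (by positivity)).exists
  obtain ⟨k, hk⟩ : ∃ k : ℕ, 4 * l / η < 2 ^ k := pow_unbounded_of_one_lt _ one_lt_two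
  set N : ℝ := β * 2 ^ k with hN
  have hN0 : 0 < N := by positivity
  have hlN : l * (1 / N) ≤ η / 4 := by
    have : (2 : ℝ) ^ k ≤ N := le_mul_of_one_le_left (by positivity) hβ
    rw [div_lt_iff₀ hη] at hk
    rw [mul_one_div, div_le_iff₀ hN0]
    nlinarith
  set f : ℕ → ℝ := fun i => if i < l then (⌊c i * N⌋₊ : ℝ) / N else 0 with hf
  have hf_lt : ∀ i, i < l → f i = (⌊c i * N⌋₊ : ℝ) / N := fun i hi => by simp [hf, hi]
  have hf_ge : ∀ i, l ≤ i → f i = 0 := fun i hi => by simp [hf, not_lt.2 hi]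
  have hf0 : ∀ i, 0 ≤ f i := fun i => by
    simp only [hf]; split_ifs <;> positivity
  have hfc : ∀ i, f i ≤ c i := fun i => by
    rcases lt_or_ge i l with hi | hi
    · rw [hf_lt i hi, div_le_iff₀ hN0]
      exact Nat.floor_le (mul_nonneg (hc0 i) hN0.le)
    · rw [hf_ge i hi]; exact hc0 i
  have hfs : Summable f := Summable.of_nonneg_of_le hf0 hfc hc
  set d : ℕ → ℝ := fun i => c i - f i with hd
  have hds : Summable d := hc.sub hfs
  have hd0 : ∀ i, 0 ≤ d i := fun i => sub_nonneg.2 (hfc i)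
  set δ : ℝ := ∑' i, d i / 2 ^ i
  have hδ0 : 0 ≤ δ := tsum_nonneg fun i => div_nonneg (hd0 i) (by positivity)
  have hδμ : δ ≤ ∑' i, d i :=
    hds.div_two_pow.tsum_le_tsum
      (fun i => div_le_self (hd0 i) (one_le_pow₀ one_le_two)) hds
  have hμ : ∑' i, d i ≤ η / 2 := by
    have h1 : ∑ i ∈ Finset.range l, d i ≤ l * (1 / N) := by
      have h := Finset.sum_le_card_nsmul (Finset.range l) d (1 / N) fun i hi => by
        have h2 := Nat.lt_floor_add_one (c i * N)
        simp only [hd]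
        rw [hf_lt i (Finset.mem_range.1 hi), sub_le_iff_le_add, ← add_div, le_div_iff₀ hN0]
        linarith
      simpa using h
    have h2 : ∑' i, d (i + l) = ∑' i, c (i + l) :=
      tsum_congr fun i => by simp [hd, hf_ge (i + l) (Nat.le_add_left l i)]
    rw [← hds.sum_add_tsum_nat_add l, h2]
    linarith
  set g : ℕ → ℝ := Pi.single 0 δ with hg
  have hgs : HasSum g δ := hasSum_pi_single 0 δ
  have hg0 : ∀ i, 0 ≤ g i := fun i => by
    rcases eq_or_ne i 0 with rfl | hi
    · simpa [hg] using hδ0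
    · simp [hg, hi]
  have hcts : HasSum (fun i => f i + g i) (∑' i, f i + δ) := hfs.hasSum.add hgs
  have hct0 : ∀ i, 0 ≤ f i + g i := fun i => add_nonneg (hf0 i) (hg0 i)
  have htot : ∑' i, f i + δ ≤ 1 := by
    have := hc.tsum_sub hfs
    have := hC.tsum_le_one
    linarith
  have hδeq : δ = 1 / (β * 2 ^ b) - ∑' i, f i / 2 ^ i := by
    rw [← hC.2.1, ← hc.div_two_pow.tsum_sub hfs.div_two_pow]
    exact tsum_congr fun i => sub_div _ _ _
  have hδint : ∃ m : ℕ, δ * (β * 2 ^ (k + l + b)) = m := by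
    have h1 : ∑' i, f i / 2 ^ i = ∑ i ∈ Finset.range l, f i / 2 ^ i :=
      tsum_eq_sum fun i hi => by simp [hf_ge i (by simpa using hi)]
    have h2 : δ * (β * 2 ^ (k + l + b)) =
        ((2 ^ (k + l) - ∑ i ∈ Finset.range l, (⌊c i * N⌋₊ : ℤ) * 2 ^ (l - i + b) : ℤ) : ℝ) := by
      rw [hδeq, h1, sub_mul, Finset.sum_mul]
      push_cast
      congr 1
      · rw [pow_add _ (k + l)]; field_simp
      · refine Finset.sum_congr rfl fun i hi => ?_
        rw [Finset.mem_range] at hi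
        obtain ⟨j, rfl⟩ := Nat.exists_eq_add_of_lt hi
        rw [hf_lt i hi, hN, show i + j + 1 - i + b = j + 1 + b by omega,
          show k + (i + j + 1) + b = k + i + (j + 1 + b) by omega, pow_add _ (k + i), pow_add _ k i]
        field_simp
    obtain ⟨m, hm⟩ := Int.eq_ofNat_of_zero_le (a := 2 ^ (k + l) - ∑ i ∈ Finset.range l,
        (⌊c i * N⌋₊ : ℤ) * 2 ^ (l - i + b)) (by
      have : 0 ≤ δ * (β * 2 ^ (k + l + b)) := by positivity
      rw [h2] at this
      exact_mod_cast this)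
    exact ⟨m, by rw [h2, hm]; simp⟩
  have hfint : ∀ i, ∃ m : ℕ, f i * (β * 2 ^ (k + l + b)) = m := fun i => by
    rcases lt_or_ge i l with hi | hi
    · refine ⟨⌊c i * N⌋₊ * 2 ^ (l + b), ?_⟩
      rw [hf_lt i hi, hN, add_assoc, pow_add _ k]
      push_cast
      field_simp
    · exact ⟨0, by simp [hf_ge i hi]⟩
  refine ⟨k + l + b, fun i => f i + g i, ⟨fun i => ⟨hct0 i, ?_⟩, ?_, fun n => ?_⟩,
    fun i hi => ?_, fun i => ?_, ?_⟩
  · exact (le_hasSum hcts i fun j _ => hct0 j).trans htot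
  · have h : ∑' i, g i / 2 ^ i = δ := by
      rw [tsum_eq_single 0 fun i hi => by simp [hg, hi]]
      simp [hg]
    simp only [add_div]
    rw [hfs.div_two_pow.tsum_add hgs.summable.div_two_pow, h, hδeq]
    ring
  · exact (sum_le_hasSum _ (fun i _ => hct0 i) hcts).trans htot
  · simp [hf_ge i (by omega), hg, show i ≠ 0 by omega]
  · obtain ⟨m, hm⟩ := hfint i
    rcases eq_or_ne i 0 with rfl | hi
    · obtain ⟨m', hm'⟩ := hδint
      exact ⟨m + m', by simp [hg, add_mul, hm, hm']⟩
    · exact ⟨m, by simp [hg, hi, hm]⟩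
  · calc ∑' i, |f i + g i - c i| ≤ ∑' i, (d i + g i) := by
          refine (hcts.summable.sub hc).abs.tsum_le_tsum (fun i => ?_) (hds.add hgs.summable)
          rw [abs_le]
          have := hd0 i
          have := hg0 i
          constructor <;> simp only [hd] at * <;> linarith
      _ = ∑' i, d i + δ := by rw [hds.tsum_add hgs.summable, hgs.tsum_eq]
      _ ≤ η := by linarith

/-- Any `(c,b) ∈ C(β)` can be replaced by a `K`-feasible `(c̃,b) ∈ C^{≤K}(β)` such that
every feasible `α̃` for `c̃` has a matching feasible `α` for `c` with close `P`-value. -/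
theorem approx_by_feasible_c (β : ℝ) (hβ : β ∈ Set.Ico (1 : ℝ) 2)
    (c : ℕ → ℝ) (b : ℕ) (hC : memC β c b) (ε : ℝ) (hε : 0 < ε) :
    ∃ K : ℕ, ∃ ct : ℕ → ℝ, memC β ct b ∧ (∀ i, K < i → ct i = 0) ∧ kFeasC β K ct ∧
      ∀ αt : ℕ → ℝ, (∀ i, αt i ∈ Set.Icc (0 : ℝ) 1) →
        (∑' i : ℕ, αt i * ct i / 2 ^ i) = 1 / (β * 2 ^ (b + 1)) →
        ∃ α : ℕ → ℝ, (∀ i, α i ∈ Set.Icc (0 : ℝ) 1) ∧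
          (∑' i : ℕ, α i * c i / 2 ^ i) = 1 / (β * 2 ^ (b + 1)) ∧
          |Pfun ct αt - Pfun c α| ≤ ε := by
  have hβ0 : 0 < β := by linarith [hβ.1]
  obtain ⟨δ, hδ, hmod⟩ := exists_binH_modulus (ε := ε / 3) (by positivity)
  set S : ℝ := 1 / (β * 2 ^ b) with hS
  have hS0 : 0 < S := by positivity
  have hhalf : 1 / (β * 2 ^ (b + 1)) = S / 2 := by rw [hS, pow_succ]; field_simp
  obtain ⟨η, hη, hηε, hηδ⟩ : ∃ η : ℝ, 0 < η ∧ η ≤ ε / 3 ∧ η + 2 * η / S < δ := by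
    have h1 : 0 < 1 + 2 / S := by positivity
    refine ⟨min (ε / 3) (δ / 2 / (1 + 2 / S)), by positivity, min_le_left _ _, ?_⟩
    have h2 := min_le_right (ε / 3) (δ / 2 / (1 + 2 / S))
    rw [le_div_iff₀ h1] at h2
    calc _ = min (ε / 3) (δ / 2 / (1 + 2 / S)) * (1 + 2 / S) := by ring
      _ < δ := by linarith
  have habs : ∀ {x : ℝ}, x ∈ Set.Icc (0 : ℝ) 1 → |x| ≤ 1 := fun hx => by
    rw [abs_of_nonneg hx.1]; exact hx.2
  obtain ⟨K, ct, hCt, hsupp, hfeas, hdist⟩ := exists_feasible_near hβ.1 hC hη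
  refine ⟨K, ct, hCt, hsupp, hfeas, fun a ha hsum => ?_⟩
  have hc0 : ∀ i, 0 ≤ c i := fun i => (hC.1 i).1
  have hw : ∑' i, c i / 2 ^ i = S := hC.2.1
  have hT : |∑' i, a i * (c i / 2 ^ i) - (∑' i, c i / 2 ^ i) / 2| ≤ η := by
    have hx : ∀ i, |a i / 2 ^ i| ≤ 1 := fun i => habs
      ⟨div_nonneg (ha i).1 (by positivity),
        div_le_one_of_le₀ ((ha i).2.trans (one_le_pow₀ one_le_two)) (by positivity)⟩
    have h := abs_tsum_mul_sub_tsum_mul_le (t := 0) hx hx (by simp) hCt.summable hC.summable hc0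
      hC.tsum_le_one
    have h1 : ∑' i, a i / 2 ^ i * ct i = S / 2 := by
      rw [← hhalf, ← hsum]
      exact tsum_congr fun i => by ring
    have h2 : ∑' i, a i / 2 ^ i * c i = ∑' i, a i * (c i / 2 ^ i) := tsum_congr fun i => by ring
    rw [h1, h2, abs_sub_comm] at h
    rw [hw]
    linarith
  obtain ⟨α, hα, hαsum, hαa⟩ :=
    exists_half_weight_near hC.summable.div_two_pow ha (hw ▸ hS0) hT
  rw [hw] at hαsum hαa
  refine ⟨α, hα, ?_, ?_⟩
  · simp only [mul_div_assoc]
    rw [hαsum, hhalf]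
  have hmem : ∀ {v x : ℕ → ℝ}, memC β v b → (∀ i, x i ∈ Set.Icc (0 : ℝ) 1) →
      ∑' i, x i * v i ∈ Set.Icc (0 : ℝ) 1 := fun {v x} hv hx =>
    ⟨tsum_nonneg fun i => mul_nonneg (hx i).1 (hv.1 i).1,
      ((hv.summable.mul_of_abs_le_one fun i => habs (hx i)).tsum_le_tsum
        (fun i => mul_le_of_le_one_left (hv.1 i).1 (hx i).2) hv.summable).trans hv.tsum_le_one⟩
  have haα : ∀ i, |a i - α i| ≤ 2 * η / S := fun i => abs_sub_comm (a i) (α i) ▸ hαa i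
  have hentropy := abs_tsum_mul_sub_tsum_mul_le (t := ε / 3)
    (fun i => abs_binH_le_one (ha i)) (fun i => abs_binH_le_one (hα i))
    (fun i => (hmod _ (ha i) _ (hα i) (by linarith [haα i])).le)
    hCt.summable hC.summable hc0 hC.tsum_le_one
  have hmass := abs_tsum_mul_sub_tsum_mul_le (fun i => habs (ha i)) (fun i => habs (hα i)) haα
    hCt.summable hC.summable hc0 hC.tsum_le_one
  have hlast := hmod _ (hmem hCt ha) _ (hmem hC hα) (by linarith)
  calc |Pfun ct a - Pfun c α|
      = |(∑' i, binH (a i) * ct i - ∑' i, binH (α i) * c i) -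
          (binH (∑' i, a i * ct i) - binH (∑' i, α i * c i))| := by
        simp only [Pfun]; ring_nf
    _ ≤ |∑' i, binH (a i) * ct i - ∑' i, binH (α i) * c i| +
          |binH (∑' i, a i * ct i) - binH (∑' i, α i * c i)| := abs_sub _ _
    _ ≤ ε := by linarith
end

section
/- Fix an integer d ≥ 2 and a real β with 1/(d²+1) ≤ β ≤ 1/d. For every ε > 0 there exists A ∈ ℕ such that for every a ≥ A, setting n = ⌊d^a/(d·β)⌋, there exists a non-constant d-adic distribution μ on X_n with ρ(Div(μ)) ≤ 2^{(f_d(β)+ε)·n}. -/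
/-- A `d`-adic distribution on `X_n`: nonnegative, sums to 1, each value `0` or `d^{-ℓ}`, `ℓ ≥ 1`. -/
def IsDadicDist (d n : ℕ) (μ : Fin n → ℝ) : Prop :=
  (∀ i, 0 ≤ μ i) ∧ (∑ i, μ i) = 1 ∧
  ∀ i, μ i = 0 ∨ ∃ ℓ : ℕ, 1 ≤ ℓ ∧ μ i = ((d : ℝ) ^ ℓ)⁻¹

/-- An ordered partition of `X_n` into `d` pairwise disjoint sets covering `X_n`. -/
def IsOrderedPartition (d n : ℕ) (S : Fin d → Finset (Fin n)) : Prop :=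
  (∀ j j', j ≠ j' → Disjoint (S j) (S j')) ∧
  (Finset.univ.biUnion S = Finset.univ)

/-- `S ∈ Div(μ)`: an ordered partition each of whose parts has `μ`-measure `1/d`. -/
def MemDiv (d n : ℕ) (μ : Fin n → ℝ) (S : Fin d → Finset (Fin n)) : Prop :=
  IsOrderedPartition d n S ∧ ∀ j, (∑ x ∈ S j, μ x) = 1 / (d : ℝ)

/-- A `d`-adic hitter: a collection of ordered partitions meeting `Div(μ)` for
every non-constant `d`-adic distribution `μ` on `X_n`. -/
def IsHitter (d n : ℕ) (Q : Finset (Fin d → Finset (Fin n))) : Prop :=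
  (∀ S ∈ Q, IsOrderedPartition d n S) ∧
  ∀ μ : Fin n → ℝ, IsDadicDist d n μ → (∃ i j, μ i ≠ μ j) → ∃ S ∈ Q, MemDiv d n μ S

/-- `q^{(d)}(n)`: minimum cardinality of a `d`-adic hitter on `X_n`. -/
noncomputable def qd (d n : ℕ) : ℕ :=
  sInf {m | ∃ Q : Finset (Fin d → Finset (Fin n)), IsHitter d n Q ∧ Q.card = m}

/-- `ρ_k(Div(μ))` for a type `k : Fin d → ℕ`. -/
noncomputable def rhoType (d n : ℕ) (μ : Fin n → ℝ) (k : Fin d → ℕ) : ℝ :=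
  (({S : Fin d → Finset (Fin n) | MemDiv d n μ S ∧ ∀ j, (S j).card = k j}.ncard : ℝ)) /
    (Nat.multinomial Finset.univ k : ℝ)

/-- `ρ(Div(μ)) = max over types k of ρ_k(Div(μ))`. -/
noncomputable def rhoDiv (d n : ℕ) (μ : Fin n → ℝ) : ℝ :=
  sSup {r | ∃ k : Fin d → ℕ, (∑ j, k j) = n ∧ r = rhoType d n μ k}

/-- `ρ^{(d)}_min(n)`: minimum of `ρ(Div(μ))` over non-constant `d`-adic `μ` on `X_n`. -/
noncomputable def rhoMinD (d n : ℕ) : ℝ :=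
  sInf {r | ∃ μ : Fin n → ℝ, IsDadicDist d n μ ∧ (∃ i j, μ i ≠ μ j) ∧ r = rhoDiv d n μ}

/-- `f_d(β) = dβ log₂ d − ((1−(d−1)β) log₂(1/(1−(d−1)β)) + (d−1)β log₂(1/β))`. -/
noncomputable def fdFun (d : ℕ) (β : ℝ) : ℝ :=
  (d : ℝ) * β * Real.logb 2 d -
    ((1 - ((d : ℝ) - 1) * β) * Real.logb 2 (1 / (1 - ((d : ℝ) - 1) * β)) +
      ((d : ℝ) - 1) * β * Real.logb 2 (1 / β))

/-- Under `μ`, the elements of `H` have the common mass `d^{-a}`, the elements of `T` are positive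
with total mass `d^{-a}`, and all other elements are null. -/
structure HasTail (d n a : ℕ) (μ : Fin n → ℝ) (H T : Finset (Fin n)) : Prop where
  disjoint : Disjoint H T
  heavy : ∀ i ∈ H, μ i = ((d : ℝ) ^ a)⁻¹
  pos : ∀ i ∈ T, 0 < μ i
  sum_tail : ∑ i ∈ T, μ i = ((d : ℝ) ^ a)⁻¹
  null : ∀ i, i ∉ H → i ∉ T → μ i = 0
  card_heavy : H.card + 1 = d ^ a

theorem exists_dadic_tail {α : Type*} [DecidableEq α] (d : ℕ) (hd : 2 ≤ d) (m : ℕ) :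
    ∀ (a : ℕ) (T : Finset α), T.card = (d - 1) * m + 1 →
      ∃ τ : α → ℝ, (∀ i ∈ T, ∃ l : ℕ, a ≤ l ∧ τ i = ((d : ℝ) ^ l)⁻¹) ∧
        ∑ i ∈ T, τ i = ((d : ℝ) ^ a)⁻¹ := by
  have hd0 : (d : ℝ) ≠ 0 := by positivity
  induction m with
  | zero =>
    intro a T hT
    obtain ⟨x, rfl⟩ := Finset.card_eq_one.1 (by simpa using hT)
    exact ⟨fun _ => ((d : ℝ) ^ a)⁻¹, fun _ _ => ⟨a, le_rfl, rfl⟩, by simp⟩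
  | succ m ih =>
    intro a T hT
    obtain ⟨T', hT', hcard⟩ := Finset.exists_subset_card_eq (s := T) (n := (d - 1) * m + 1)
      (by rw [hT, Nat.mul_succ]; omega)
    obtain ⟨τ, hτ, hsum⟩ := ih (a + 1) T' hcard
    refine ⟨fun i => if i ∈ T' then τ i else ((d : ℝ) ^ (a + 1))⁻¹, fun i _ => ?_, ?_⟩
    · by_cases h : i ∈ T'
      · obtain ⟨l, hl, e⟩ := hτ i h
        exact ⟨l, by omega, by simp [h, e]⟩
      · exact ⟨a + 1, by omega, by simp [h]⟩
    · rw [← Finset.sum_sdiff hT', Finset.sum_congr rfl (g := fun _ => ((d : ℝ) ^ (a + 1))⁻¹)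
        (fun i hi => if_neg (Finset.mem_sdiff.1 hi).2),
        Finset.sum_congr (s₁ := T') rfl (g := τ) (fun i hi => if_pos hi), hsum,
        Finset.sum_const, Finset.card_sdiff_of_subset hT', hT, hcard]
      have : (d - 1) * (m + 1) + 1 - ((d - 1) * m + 1) = d - 1 := by
        rw [Nat.mul_succ]; omega
      rw [this, nsmul_eq_mul, Nat.cast_sub (by omega)]
      field_simp
      push_cast
      ring

theorem exists_hasTail (d n a : ℕ) (hd : 2 ≤ d) (ha : 1 ≤ a) (hn : d ^ a + d ≤ n) :
    ∃ (μ : Fin n → ℝ) (H T : Finset (Fin n)), IsDadicDist d n μ ∧ (∃ i j, μ i ≠ μ j) ∧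
      HasTail d n a μ H T ∧ ((H ∪ T)ᶜ).card ≤ d := by
  have hd0 : (0 : ℝ) < d := by positivity
  have hda : d ≤ d ^ a := Nat.le_self_pow (by omega) d
  set m := (n - d ^ a) / (d - 1) with hm
  have hm1 : (d - 1) * m ≤ n - d ^ a := Nat.mul_div_le _ _
  have hm2 : n - d ^ a < (d - 1) * m + (d - 1) := by
    rw [← Nat.mul_succ]; exact Nat.lt_mul_div_succ _ (by omega)
  have hm3 : 1 ≤ m := (Nat.one_le_div_iff (by omega)).2 (by omega)
  have hm4 : d - 1 ≤ (d - 1) * m := Nat.le_mul_of_pos_right _ hm3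
  obtain ⟨T, -, hT⟩ := Finset.exists_subset_card_eq (s := (Finset.univ : Finset (Fin n)))
    (n := (d - 1) * m + 1) (by rw [Finset.card_univ, Fintype.card_fin]; omega)
  obtain ⟨H, hHT, hH⟩ := Finset.exists_subset_card_eq (s := Tᶜ) (n := d ^ a - 1)
    (by rw [Finset.card_compl, Fintype.card_fin, hT]; omega)
  obtain ⟨τ, hτ, hsum⟩ := exists_dadic_tail d hd m a T hT
  have hdisj : Disjoint H T := Finset.disjoint_left.2 fun i hi => by simpa using hHT hi
  set μ : Fin n → ℝ := fun i => if i ∈ T then τ i else if i ∈ H then ((d : ℝ) ^ a)⁻¹ else 0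
  have hμT : ∀ i ∈ T, μ i = τ i := fun i hi => if_pos hi
  have hμH : ∀ i ∈ H, μ i = ((d : ℝ) ^ a)⁻¹ := fun i hi => by
    simp [μ, Finset.disjoint_left.1 hdisj hi, hi]
  have hμ0 : ∀ i, i ∉ H → i ∉ T → μ i = 0 := fun i h h' => by simp [μ, h, h']
  have hval : ∀ i, μ i = 0 ∨ ∃ l : ℕ, 1 ≤ l ∧ μ i = ((d : ℝ) ^ l)⁻¹ := by
    intro i
    by_cases h : i ∈ T
    · obtain ⟨l, hl, e⟩ := hτ i h
      exact Or.inr ⟨l, by omega, by rw [hμT i h, e]⟩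
    · by_cases h' : i ∈ H
      · exact Or.inr ⟨a, ha, hμH i h'⟩
      · exact Or.inl (hμ0 i h' h)
  have hsumT : ∑ i ∈ T, μ i = ((d : ℝ) ^ a)⁻¹ := by rw [Finset.sum_congr rfl hμT, hsum]
  have hpos : ∀ i ∈ T, 0 < μ i := fun i hi => by
    obtain ⟨l, -, e⟩ := hτ i hi
    rw [hμT i hi, e]; positivity
  refine ⟨μ, H, T, ⟨fun i => ?_, ?_, hval⟩, ?_,
    ⟨hdisj, hμH, hpos, hsumT, hμ0, by omega⟩, ?_⟩
  · rcases hval i with h | ⟨l, -, h⟩ <;> rw [h]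
    positivity
  · rw [← Finset.sum_subset (Finset.subset_univ (H ∪ T)), Finset.sum_union hdisj, hsumT,
      Finset.sum_congr rfl hμH, Finset.sum_const, hH, nsmul_eq_mul, Nat.cast_sub (by omega)]
    · push_cast
      field_simp
      ring
    · intro i _ hi
      rw [Finset.mem_union, not_or] at hi
      exact hμ0 i hi.1 hi.2
  · obtain ⟨h, hh⟩ : H.Nonempty := Finset.card_pos.1 (by omega)
    obtain ⟨x, hx, y, hy, hxy⟩ := Finset.one_lt_card.1 (show 1 < T.card by omega)
    refine ⟨x, h, ne_of_lt ?_⟩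
    rw [hμH h hh, ← hsumT]
    exact Finset.single_lt_sum hxy.symm hx hy (hpos y hy) fun k hk _ => (hpos k hk).le
  · rw [Finset.card_compl, Finset.card_union_of_disjoint hdisj, Fintype.card_fin, hT, hH]
    omega

theorem IsOrderedPartition.exists_cell {d n : ℕ} {S : Fin d → Finset (Fin n)}
    (hS : IsOrderedPartition d n S) : ∃ c : Fin n → Fin d, ∀ i j, c i = j ↔ i ∈ S j := by
  have : ∀ i, ∃ j, i ∈ S j := fun i => by
    obtain ⟨j, -, hj⟩ := Finset.mem_biUnion.1 (hS.2 ▸ Finset.mem_univ i)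
    exact ⟨j, hj⟩
  choose c hc using this
  refine ⟨c, fun i j => ⟨fun e => e ▸ hc i, fun hi => ?_⟩⟩
  by_contra hne
  exact Finset.disjoint_left.1 (hS.1 _ _ hne) (hc i) hi

namespace HasTail

variable {d n a : ℕ} {μ : Fin n → ℝ} {H T : Finset (Fin n)}

theorem tail_nonempty (h : HasTail d n a μ H T) (hd : 2 ≤ d) : T.Nonempty := by
  rw [Finset.nonempty_iff_ne_empty]
  rintro rfl
  have := h.sum_tail
  have h0 : (0 : ℝ) < ((d : ℝ) ^ a)⁻¹ := by positivity
  simp only [Finset.sum_empty] at this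
  linarith

theorem sum_eq (h : HasTail d n a μ H T) (s : Finset (Fin n)) :
    ∑ i ∈ s, μ i = ((s ∩ H).card : ℝ) * ((d : ℝ) ^ a)⁻¹ + ∑ i ∈ s ∩ T, μ i := by
  rw [← Finset.sum_subset (s₁ := (s ∩ H) ∪ (s ∩ T)) (s₂ := s), Finset.sum_union,
    Finset.sum_congr (s₁ := s ∩ H) rfl fun i hi => h.heavy i (Finset.mem_inter.1 hi).2,
    Finset.sum_const, nsmul_eq_mul]
  · exact h.disjoint.mono Finset.inter_subset_right Finset.inter_subset_right
  · exact Finset.union_subset Finset.inter_subset_left Finset.inter_subset_left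
  · intro i hs hi
    simp only [Finset.mem_union, Finset.mem_inter, hs, true_and, not_or] at hi
    exact h.null i hi.1 hi.2

theorem tail_subset (h : HasTail d n a μ H T) (hd : 2 ≤ d) (ha : 1 ≤ a)
    {s : Finset (Fin n)} (hs : ∑ i ∈ s, μ i = 1 / (d : ℝ)) {x : Fin n} (hxs : x ∈ s)
    (hx : x ∈ T) : T ⊆ s := by
  have hd0 : (0 : ℝ) < d := by positivity
  rw [h.sum_eq] at hs
  obtain ⟨b, rfl⟩ : ∃ b, a = b + 1 := ⟨a - 1, by omega⟩
  have hpos : 0 < ∑ i ∈ s ∩ T, μ i :=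
    Finset.sum_pos (fun i hi => h.pos i (Finset.mem_inter.1 hi).2) ⟨x, by simp [hxs, hx]⟩
  have hlt : (s ∩ H).card < d ^ b := by
    have h1 : ((s ∩ H).card : ℝ) * ((d : ℝ) ^ (b + 1))⁻¹ < 1 / d := by linarith
    rw [← div_eq_mul_inv, div_lt_div_iff₀ (by positivity) hd0, pow_succ] at h1
    have h2 : ((s ∩ H).card : ℝ) < (d : ℝ) ^ b := by nlinarith
    exact_mod_cast h2
  have hle : ((d : ℝ) ^ (b + 1))⁻¹ ≤ ∑ i ∈ s ∩ T, μ i := by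
    have h1 : ((s ∩ H).card : ℝ) + 1 ≤ (d : ℝ) ^ b := by exact_mod_cast hlt
    have h2 : 1 / (d : ℝ) = (d : ℝ) ^ b * ((d : ℝ) ^ (b + 1))⁻¹ := by
      field_simp
      ring
    have h3 := mul_le_mul_of_nonneg_right h1 (inv_nonneg.2 (pow_nonneg hd0.le (b + 1)))
    linarith
  intro y hy
  by_contra hys
  have := Finset.sum_lt_sum_of_subset (f := μ) (Finset.inter_subset_right (s₁ := s) (s₂ := T)) hy
    (by simp [hys]) (h.pos y hy) fun j hj _ => (h.pos j hj).le
  rw [h.sum_tail] at this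
  linarith

theorem exists_part (h : HasTail d n a μ H T) (hd : 2 ≤ d) (ha : 1 ≤ a)
    (hz : ((H ∪ T)ᶜ).card ≤ d) {S : Fin d → Finset (Fin n)} (hS : MemDiv d n μ S) :
    ∃ j₀, ∀ j ≠ j₀, (d : ℝ) ^ a / d ≤ (S j).card ∧ ((S j).card : ℝ) ≤ (d : ℝ) ^ a / d + d := by
  have hd0 : (0 : ℝ) < d := by positivity
  obtain ⟨x, hx⟩ := h.tail_nonempty hd
  obtain ⟨j₀, -, hj₀⟩ := Finset.mem_biUnion.1 (hS.1.2 ▸ Finset.mem_univ x)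
  have hT := h.tail_subset hd ha (hS.2 j₀) hj₀ hx
  refine ⟨j₀, fun j hj => ?_⟩
  have hST : S j ∩ T = ∅ :=
    Finset.disjoint_iff_inter_eq_empty.1 ((hS.1.1 j j₀ hj).mono_right hT)
  have hsum := hS.2 j
  rw [h.sum_eq, hST, Finset.sum_empty, add_zero] at hsum
  have hcard : ((S j ∩ H).card : ℝ) = (d : ℝ) ^ a / d := by
    field_simp at hsum ⊢
    linarith
  rw [← hcard]
  refine ⟨by exact_mod_cast Finset.card_le_card Finset.inter_subset_left, ?_⟩
  have hsub : S j ⊆ (S j ∩ H) ∪ (H ∪ T)ᶜ := by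
    intro i hi
    have : i ∉ T := fun hiT => by
      have : i ∈ S j ∩ T := Finset.mem_inter.2 ⟨hi, hiT⟩
      simp [hST] at this
    by_cases hiH : i ∈ H <;> simp [hi, hiH, this]
  exact_mod_cast (Finset.card_le_card hsub).trans
    ((Finset.card_union_le _ _).trans (Nat.add_le_add_left hz _))

theorem ncard_div_le (h : HasTail d n a μ H T) (hd : 2 ≤ d) (ha : 1 ≤ a)
    (hz : ((H ∪ T)ᶜ).card ≤ d) (k : Fin d → ℕ) :
    {S : Fin d → Finset (Fin n) | MemDiv d n μ S ∧ ∀ j, (S j).card = k j}.ncard ≤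
      d ^ (d ^ a + d) := by
  classical
  obtain ⟨x, hx⟩ := h.tail_nonempty hd
  have hcell : ∀ S : Fin d → Finset (Fin n), ∃ c : Fin n → Fin d,
      MemDiv d n μ S → ∀ i j, c i = j ↔ i ∈ S j := by
    intro S
    by_cases hS : MemDiv d n μ S
    · obtain ⟨c, hc⟩ := hS.1.exists_cell
      exact ⟨c, fun _ => hc⟩
    · exact ⟨fun _ => ⟨0, by omega⟩, fun h' => absurd h' hS⟩
  choose c hc using hcell
  have hxc : ∀ S, MemDiv d n μ S → ∀ i ∈ T, c S i = c S x := fun S hS i hi =>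
    (hc S hS i _).2 (h.tail_subset hd ha (hS.2 _) ((hc S hS x _).1 rfl) hx hi)
  let U : Finset (Fin n) := insert x (H ∪ (H ∪ T)ᶜ)
  have hU : U.card ≤ d ^ a + d := by
    have h1 := Finset.card_insert_le x (H ∪ (H ∪ T)ᶜ)
    have h2 := Finset.card_union_le H (H ∪ T)ᶜ
    have h3 := h.card_heavy
    change (insert x (H ∪ (H ∪ T)ᶜ)).card ≤ _
    omega
  have hinj := Set.ncard_le_ncard_of_injOn
    (s := {S : Fin d → Finset (Fin n) | MemDiv d n μ S ∧ ∀ j, (S j).card = k j})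
    (t := Set.univ) (fun S (i : U) => c S i) (fun _ _ => Set.mem_univ _) (by
      intro S hS S' hS' e
      have hcc : ∀ i, c S i = c S' i := by
        intro i
        by_cases hi : i ∈ T
        · rw [hxc S hS.1 i hi, hxc S' hS'.1 i hi]
          exact congrFun e ⟨x, Finset.mem_insert_self _ _⟩
        · refine congrFun e ⟨i, Finset.mem_insert_of_mem ?_⟩
          by_cases hiH : i ∈ H <;> simp [hi, hiH]
      funext j
      ext i
      rw [← hc S hS.1, ← hc S' hS'.1, hcc]) Set.finite_univ
  refine hinj.trans ?_
  rw [Set.ncard_univ, Nat.card_eq_fintype_card, Fintype.card_fun, Fintype.card_fin,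
    Fintype.card_coe]
  exact Nat.pow_le_pow_right (by omega) hU

end HasTail

theorem log_factorial_le (k : ℕ) :
    Real.log (k.factorial : ℝ) ≤ k * Real.log k - k + Real.log k + 1 := by
  induction k with
  | zero => simp
  | succ k ih =>
    rcases Nat.eq_zero_or_pos k with rfl | hk
    · simp
    have hk' : (0 : ℝ) < k := by exact_mod_cast hk
    have h1 := Real.one_sub_inv_le_log_of_pos (x := ((k : ℝ) + 1) / k) (by positivity)
    rw [Real.log_div (by positivity) hk'.ne'] at h1
    have h2 := mul_le_mul_of_nonneg_left h1 (show (0 : ℝ) ≤ k + 1 by positivity)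
    have h3 : ((k : ℝ) + 1) * (1 - (((k : ℝ) + 1) / k)⁻¹) = 1 := by field_simp; ring
    rw [Nat.factorial_succ]
    push_cast
    rw [Real.log_mul (by positivity) (by positivity)]
    nlinarith

theorem le_log_factorial {n : ℕ} (hn : n ≠ 0) :
    n * Real.log n - n ≤ Real.log (n.factorial : ℝ) := by
  have h := Stirling.le_log_factorial_stirling hn
  have h1 : 0 ≤ Real.log n := Real.log_natCast_nonneg n
  have h2 : 0 ≤ Real.log (2 * Real.pi) := Real.log_nonneg (by linarith [Real.pi_gt_three])
  linarith

/-- Entropy lower bound for multinomial coefficients. -/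
theorem le_log_multinomial {d n : ℕ} (hn : n ≠ 0) (k : Fin d → ℕ) (hk : ∑ j, k j = n) :
    n * ∑ j, Real.negMulLog ((k j : ℝ) / n) - d * (Real.log n + 1) ≤
      Real.log (Nat.multinomial Finset.univ k : ℝ) := by
  have hn0 : (0 : ℝ) < n := by positivity
  have hkn : ∑ j, (k j : ℝ) = n := by exact_mod_cast hk
  have hspec : (∏ j, ((k j).factorial : ℝ)) * (Nat.multinomial Finset.univ k : ℝ) =
      (n.factorial : ℝ) := by
    rw [← hk]; exact_mod_cast Nat.multinomial_spec Finset.univ k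
  have hprod : (∏ j, ((k j).factorial : ℝ)) ≠ 0 :=
    Finset.prod_ne_zero_iff.2 fun j _ => by positivity
  have hmul : (Nat.multinomial Finset.univ k : ℝ) ≠ 0 := by
    intro h0
    rw [h0, mul_zero] at hspec
    exact (Nat.cast_ne_zero.2 (Nat.factorial_ne_zero n)) hspec.symm
  have hlog := congrArg Real.log hspec
  rw [Real.log_mul hprod hmul, Real.log_prod fun j _ => by positivity] at hlog
  have hterm : ∀ j, Real.log ((k j).factorial : ℝ) ≤
      -(n * Real.negMulLog ((k j : ℝ) / n)) + k j * Real.log n - k j + (Real.log n + 1) := by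
    intro j
    have h1 := log_factorial_le (k j)
    rcases Nat.eq_zero_or_pos (k j) with h0 | hpos
    · have := Real.log_natCast_nonneg n
      simp [h0]
      linarith
    · have hp : (0 : ℝ) < k j := by exact_mod_cast hpos
      have h2 : Real.log (k j) ≤ Real.log n := Real.log_le_log hp (by
        exact_mod_cast hk ▸ Finset.single_le_sum (fun i _ => Nat.zero_le (k i)) (Finset.mem_univ j))
      have h3 : n * Real.negMulLog ((k j : ℝ) / n) = -(k j * (Real.log (k j) - Real.log n)) := by
        rw [Real.negMulLog, Real.log_div hp.ne' hn0.ne']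
        field_simp
      rw [h3]
      linarith
  have hsum := Finset.sum_le_sum fun j (_ : j ∈ Finset.univ) => hterm j
  simp only [Finset.sum_add_distrib, Finset.sum_sub_distrib, Finset.sum_neg_distrib,
    ← Finset.mul_sum, ← Finset.sum_mul, hkn, Finset.sum_const, Finset.card_univ,
    Fintype.card_fin, nsmul_eq_mul] at hsum
  have := le_log_factorial hn
  linarith

theorem fdFun_mul_log_two (d : ℕ) (β : ℝ) :
    fdFun d β * Real.log 2 = d * β * Real.log d -
      (Real.negMulLog (1 - ((d : ℝ) - 1) * β) + ((d : ℝ) - 1) * Real.negMulLog β) := by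
  have h2 : Real.log 2 ≠ 0 := (Real.log_pos one_lt_two).ne'
  simp only [fdFun, Real.logb, Real.negMulLog, one_div, Real.log_inv]
  field_simp

theorem fdFun_one_div (d : ℕ) (hd : 2 ≤ d) : fdFun d (1 / (d : ℝ)) = 0 := by
  have hd0 : (d : ℝ) ≠ 0 := by positivity
  have h : 1 - ((d : ℝ) - 1) * (1 / (d : ℝ)) = 1 / d := by field_simp; ring
  rw [fdFun, h, one_div_one_div]
  field_simp
  ring

theorem rhoDiv_le_of_forall {d n : ℕ} {μ : Fin n → ℝ} {B : ℝ} (hB : 0 ≤ B)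
    (h : ∀ S, MemDiv d n μ S → rhoType d n μ (fun j => (S j).card) ≤ B) :
    rhoDiv d n μ ≤ B := by
  refine Real.sSup_le ?_ hB
  rintro r ⟨k, -, rfl⟩
  rcases Set.eq_empty_or_nonempty
    {S : Fin d → Finset (Fin n) | MemDiv d n μ S ∧ ∀ j, (S j).card = k j} with h0 | ⟨S, hS, hk⟩
  · simpa [rhoType, h0] using hB
  · obtain rfl : (fun j => (S j).card) = k := funext hk
    exact h S hS

theorem IsOrderedPartition.sum_card {d n : ℕ} {S : Fin d → Finset (Fin n)}
    (hS : IsOrderedPartition d n S) : ∑ j, (S j).card = n := by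
  rw [← Finset.card_biUnion fun j _ j' _ hne => hS.1 j j' hne, hS.2, Finset.card_univ,
    Fintype.card_fin]

/-- An ordered partition of type `k` is the first coordinate of a bijection onto `Σ j, Fin (k j)`. -/
theorem IsOrderedPartition.exists_equiv {d n : ℕ} {S : Fin d → Finset (Fin n)} {k : Fin d → ℕ}
    (hS : IsOrderedPartition d n S) (hk : ∀ j, (S j).card = k j) :
    ∃ e : Fin n ≃ (Σ j, Fin (k j)), ∀ i j, (e i).1 = j ↔ i ∈ S j := by
  obtain ⟨c, hc⟩ := hS.exists_cell
  have hcard : ∀ j, Fintype.card {i // c i = j} = k j := fun j => by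
    rw [← hk j, Fintype.card_subtype]
    congr 1
    ext i
    simp [hc]
  exact ⟨(Equiv.sigmaFiberEquiv c).symm.trans
    (Equiv.sigmaCongrRight fun j => Fintype.equivFinOfCardEq (hcard j)), fun i j => hc i j⟩

theorem ncard_type_le_multinomial {d n : ℕ} (k : Fin d → ℕ) (hk : ∑ j, k j = n) :
    {S : Fin d → Finset (Fin n) |
      IsOrderedPartition d n S ∧ ∀ j, (S j).card = k j}.ncard ≤
        Nat.multinomial Finset.univ k := by
  classical
  set A := {S : Fin d → Finset (Fin n) | IsOrderedPartition d n S ∧ ∀ j, (S j).card = k j}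
  choose e he using fun S : A => S.2.1.exists_equiv S.2.2
  have hinj : Function.Injective
      (fun p : A × ((j : Fin d) → Equiv.Perm (Fin (k j))) =>
        (e p.1).trans (Equiv.sigmaCongrRight p.2)) := by
    rintro ⟨S, σ⟩ ⟨S', σ'⟩ h
    have hi : ∀ i, Equiv.sigmaCongrRight σ (e S i) = Equiv.sigmaCongrRight σ' (e S' i) :=
      fun i => Equiv.congr_fun h i
    obtain rfl : S = S' := by
      ext j i
      rw [← he S i j, ← he S' i j]
      have := congrArg Sigma.fst (hi i)
      exact Eq.congr_left this
    refine Prod.ext rfl ?_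
    funext j
    ext1 x
    have := hi ((e S).symm ⟨j, x⟩)
    simpa using this
  have hcard := Nat.card_le_card_of_injective _ hinj
  rw [Nat.card_prod, Nat.card_pi, Nat.card_eq_fintype_card (α := _ ≃ _),
    Fintype.card_equiv (Fintype.equivOfCardEq (by simp [hk])), Fintype.card_fin,
    show n.factorial = _ from hk ▸ (Nat.multinomial_spec Finset.univ k).symm, mul_comm,
    Nat.card_coe_set_eq] at hcard
  simp only [Nat.card_eq_fintype_card, Fintype.card_perm, Fintype.card_fin] at hcard
  exact Nat.le_of_mul_le_mul_left hcard (Finset.prod_pos fun j _ => Nat.factorial_pos _)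

theorem rhoType_le_one {d n : ℕ} (μ : Fin n → ℝ) (k : Fin d → ℕ) (hk : ∑ j, k j = n) :
    rhoType d n μ k ≤ 1 := by
  refine div_le_one_of_le₀ ?_ (Nat.cast_nonneg _)
  have hsub : {S : Fin d → Finset (Fin n) | MemDiv d n μ S ∧ ∀ j, (S j).card = k j} ⊆
      {S | IsOrderedPartition d n S ∧ ∀ j, (S j).card = k j} := fun S hS => ⟨hS.1.1, hS.2⟩
  exact_mod_cast (Set.ncard_le_ncard hsub (Set.toFinite _)).trans
    (ncard_type_le_multinomial k hk)

theorem exists_nonconstant_dadic (d n : ℕ) (hd : 2 ≤ d) (hn : d < n) :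
    ∃ μ : Fin n → ℝ, IsDadicDist d n μ ∧ ∃ i j, μ i ≠ μ j := by
  have hd0 : (0 : ℝ) < d := by positivity
  refine ⟨fun i => if (i : ℕ) < d then ((d : ℝ) ^ 1)⁻¹ else 0, ⟨fun i => ?_, ?_, fun i => ?_⟩,
    ⟨0, by omega⟩, ⟨d, hn⟩, ?_⟩
  · dsimp only
    split_ifs <;> positivity
  · rw [Fin.sum_univ_eq_sum_range (fun i => if i < d then ((d : ℝ) ^ 1)⁻¹ else 0),
      ← Finset.sum_filter, Finset.sum_const]
    have : (Finset.range n).filter (· < d) = Finset.range d := by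
      ext i
      simp only [Finset.mem_filter, Finset.mem_range]
      omega
    rw [this, Finset.card_range, nsmul_eq_mul, pow_one, mul_inv_cancel₀ hd0.ne']
  · by_cases h : (i : ℕ) < d
    · exact Or.inr ⟨1, le_rfl, if_pos h⟩
    · exact Or.inl (if_neg h)
  · simp [show 0 < d by omega, hd0.ne']

open Filter Topology in
theorem tendsto_floor_pow_div {d : ℕ} (hd : 2 ≤ d) {β : ℝ} (hβ : 0 < β) :
    Tendsto (fun a : ℕ => (⌊(d : ℝ) ^ a / (d * β)⌋₊ : ℝ)) atTop atTop ∧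
      Tendsto (fun a : ℕ => (d : ℝ) ^ a / (⌊(d : ℝ) ^ a / (d * β)⌋₊ : ℝ)) atTop (𝓝 (d * β)) := by
  have hd0 : (0 : ℝ) < d := by positivity
  have hpow : Tendsto (fun a : ℕ => (d : ℝ) ^ a) atTop atTop :=
    tendsto_pow_atTop_atTop_of_one_lt (by exact_mod_cast hd)
  constructor
  · exact tendsto_natCast_atTop_atTop.comp
      (tendsto_nat_floor_atTop.comp (hpow.atTop_div_const (by positivity)))
  · have h := (tendsto_nat_floor_mul_div_atTop (R := ℝ) (a := ((d : ℝ) * β)⁻¹)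
      (by positivity)).comp hpow
    have h' := h.inv₀ (by positivity)
    rw [inv_inv] at h'
    refine h'.congr fun a => ?_
    simp only [Function.comp, inv_div]
    rw [div_eq_inv_mul ((d : ℝ) ^ a) (d * β)]

theorem exists_forall_sub_le_negMulLog {x η : ℝ} (hη : 0 < η) :
    ∃ δ > 0, ∀ y, |y - x| < δ → Real.negMulLog x - η ≤ Real.negMulLog y := by
  obtain ⟨δ, hδ, h⟩ := Metric.continuous_iff.1 Real.continuous_negMulLog x η hη
  refine ⟨δ, hδ, fun y hy => ?_⟩
  have := h y (by rwa [Real.dist_eq])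
  rw [Real.dist_eq, abs_lt] at this
  linarith

theorem HasTail.rhoType_le {d n a : ℕ} {μ : Fin n → ℝ} {H T : Finset (Fin n)}
    (h : HasTail d n a μ H T) (hd : 2 ≤ d) (ha : 1 ≤ a) (hn : n ≠ 0)
    (hz : ((H ∪ T)ᶜ).card ≤ d) (k : Fin d → ℕ) (hk : ∑ j, k j = n) :
    rhoType d n μ k ≤ Real.exp (((d : ℝ) ^ a + d) * Real.log d + d * (Real.log n + 1) -
      n * ∑ j, Real.negMulLog ((k j : ℝ) / n)) := by
  have hd0 : (0 : ℝ) < d := by positivity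
  have hmult : (0 : ℝ) < Nat.multinomial Finset.univ k := by
    exact_mod_cast Nat.multinomial_pos _ _
  have h1 := le_log_multinomial hn k hk
  rw [rhoType, div_le_iff₀ hmult]
  have h2 : Real.exp (n * ∑ j, Real.negMulLog ((k j : ℝ) / n) - d * (Real.log n + 1)) ≤
      Nat.multinomial Finset.univ k := by
    rwa [← Real.le_log_iff_exp_le hmult]
  calc _ ≤ ((d ^ (d ^ a + d) : ℕ) : ℝ) := by exact_mod_cast h.ncard_div_le hd ha hz k
    _ = Real.exp (((d : ℝ) ^ a + d) * Real.log d) := by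
      rw [mul_comm, Real.exp_mul, Real.exp_log hd0]
      exact_mod_cast rfl
    _ = Real.exp (((d : ℝ) ^ a + d) * Real.log d + d * (Real.log n + 1) -
          n * ∑ j, Real.negMulLog ((k j : ℝ) / n)) *
        Real.exp (n * ∑ j, Real.negMulLog ((k j : ℝ) / n) - d * (Real.log n + 1)) := by
      rw [← Real.exp_add]; congr 1; ring
    _ ≤ _ := mul_le_mul_of_nonneg_left h2 (Real.exp_pos _).le

theorem sum_negMulLog_ge {d : ℕ} {β η δ : ℝ} {p : Fin d → ℝ} (hp : ∑ j, p j = 1) (hδ : 0 < δ)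
    (h₁ : ∀ y, |y - β| < δ → Real.negMulLog β - η ≤ Real.negMulLog y)
    (h₂ : ∀ y, |y - (1 - ((d : ℝ) - 1) * β)| < d * δ →
      Real.negMulLog (1 - ((d : ℝ) - 1) * β) - η ≤ Real.negMulLog y)
    (j₀ : Fin d) (hj₀ : ∀ j ≠ j₀, |p j - β| < δ) :
    Real.negMulLog (1 - ((d : ℝ) - 1) * β) + ((d : ℝ) - 1) * Real.negMulLog β - d * η ≤
      ∑ j, Real.negMulLog (p j) := by
  have hd1 : 1 ≤ d := by have := j₀.2; omega
  have hcard : ((Finset.univ.erase j₀).card : ℝ) = (d : ℝ) - 1 := by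
    rw [Finset.card_erase_of_mem (Finset.mem_univ _), Finset.card_univ, Fintype.card_fin,
      Nat.cast_sub hd1, Nat.cast_one]
  have hsum : p j₀ - (1 - ((d : ℝ) - 1) * β) = -∑ j ∈ Finset.univ.erase j₀, (p j - β) := by
    rw [Finset.sum_sub_distrib, Finset.sum_const, nsmul_eq_mul, hcard]
    have := Finset.add_sum_erase Finset.univ p (Finset.mem_univ j₀)
    linarith
  have habs : |p j₀ - (1 - ((d : ℝ) - 1) * β)| < d * δ := by
    rw [hsum, abs_neg]
    calc _ ≤ ∑ j ∈ Finset.univ.erase j₀, |p j - β| := Finset.abs_sum_le_sum_abs _ _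
      _ ≤ ∑ j ∈ Finset.univ.erase j₀, δ :=
        Finset.sum_le_sum fun j hj => (hj₀ j (Finset.ne_of_mem_erase hj)).le
      _ = (d - 1) * δ := by rw [Finset.sum_const, nsmul_eq_mul, hcard]
      _ < d * δ := by linarith
  have hrest : ((d : ℝ) - 1) * (Real.negMulLog β - η) ≤
      ∑ j ∈ Finset.univ.erase j₀, Real.negMulLog (p j) := by
    rw [← hcard, ← nsmul_eq_mul]
    exact Finset.card_nsmul_le_sum _ _ _ fun j hj => h₁ _ (hj₀ j (Finset.ne_of_mem_erase hj))
  rw [← Finset.add_sum_erase Finset.univ _ (Finset.mem_univ j₀)]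
  have := h₂ _ habs
  linarith

open Filter Topology in
/-- Upper bound: for `n = ⌊d^a/(d·β)⌋` with `a` large, there is a non-constant `d`-adic
distribution `μ` on `X_n` with `ρ(Div(μ)) ≤ 2^{(f_d(β)+ε)n}`. -/
theorem rhoDiv_upper (d : ℕ) (hd : 2 ≤ d) (β : ℝ)
    (hβ₁ : 1 / ((d : ℝ) ^ 2 + 1) ≤ β) (hβ₂ : β ≤ 1 / (d : ℝ)) :
    ∀ ε > (0 : ℝ), ∃ A : ℕ, ∀ a : ℕ, A ≤ a → ∀ n : ℕ,
      n = Nat.floor ((d : ℝ) ^ a / ((d : ℝ) * β)) →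
      ∃ μ : Fin n → ℝ, IsDadicDist d n μ ∧ (∃ i j, μ i ≠ μ j) ∧
        rhoDiv d n μ ≤ (2 : ℝ) ^ ((fdFun d β + ε) * n) := by
  intro ε hε
  have hd0 : (0 : ℝ) < d := by positivity
  have hβ0 : 0 < β := lt_of_lt_of_le (by positivity) hβ₁
  rcases eq_or_lt_of_le hβ₂ with rfl | hβ
  · refine ⟨2, fun a ha n hn => ?_⟩
    have hdn : d < n := by
      rw [mul_one_div_cancel hd0.ne', div_one] at hn
      have : n = d ^ a := by
        rw [hn, ← Nat.cast_pow, Nat.floor_natCast]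
      rw [this]
      exact lt_self_pow₀ (by omega) (by omega)
    obtain ⟨μ, hμ, hne⟩ := exists_nonconstant_dadic d n hd hdn
    refine ⟨μ, hμ, hne, rhoDiv_le_of_forall (by positivity) fun S hS => ?_⟩
    refine (rhoType_le_one μ _ hS.1.sum_card).trans ?_
    rw [fdFun_one_div d hd, zero_add]
    exact Real.one_le_rpow one_le_two (by positivity)
  set η := ε * Real.log 2 with hη_def
  have hη : 0 < η := mul_pos hε (Real.log_pos one_lt_two)
  have hη' : 0 < η / (2 * d) := by positivity
  obtain ⟨δ₁, hδ₁, h₁⟩ := exists_forall_sub_le_negMulLog (x := β) hη'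
  obtain ⟨δ₂, hδ₂, h₂⟩ := exists_forall_sub_le_negMulLog (x := 1 - ((d : ℝ) - 1) * β) hη'
  set δ := min δ₁ (δ₂ / d) with hδ_def
  have hδ : 0 < δ := lt_min hδ₁ (by positivity)
  have hdδ : d * δ ≤ δ₂ := by
    have := min_le_right δ₁ (δ₂ / d)
    rw [← hδ_def, le_div_iff₀ hd0] at this
    linarith
  obtain ⟨htop, hratio⟩ := tendsto_floor_pow_div hd hβ0
  set N : ℕ → ℕ := fun a => ⌊(d : ℝ) ^ a / (d * β)⌋₊ with hN
  have hsmall : Tendsto (fun a => (d : ℝ) / (N a : ℝ)) atTop (𝓝 0) := htop.const_div_atTop _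
  have hlog : Tendsto (fun a => Real.log (N a) / (N a : ℝ)) atTop (𝓝 0) :=
    Real.isLittleO_log_id_atTop.tendsto_div_nhds_zero.comp htop
  have hmain : Tendsto (fun a => ((d : ℝ) ^ a / N a + d / N a) * Real.log d +
      (d * (Real.log (N a) / N a) + d / N a)) atTop
      (𝓝 ((d * β + 0) * Real.log d + (d * 0 + 0))) :=
    ((hratio.add hsmall).mul_const _).add ((hlog.const_mul _).add hsmall)
  have hlow : Tendsto (fun a => (d : ℝ) ^ a / N a / d) atTop (𝓝 (d * β / d)) :=
    hratio.div_const _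
  have hupp : Tendsto (fun a => (d : ℝ) ^ a / N a / d + d / N a) atTop (𝓝 (d * β / d + 0)) :=
    hlow.add hsmall
  have hsize : Tendsto (fun a => (d : ℝ) ^ a / N a + d / N a) atTop (𝓝 (d * β + 0)) :=
    hratio.add hsmall
  rw [add_zero, mul_div_cancel_left₀ _ hd0.ne'] at hupp
  rw [mul_div_cancel_left₀ _ hd0.ne'] at hlow
  rw [add_zero] at hsize
  rw [add_zero, mul_zero, add_zero, add_zero] at hmain
  have hdβ : d * β < 1 := by rwa [lt_div_iff₀ hd0, mul_comm] at hβ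
  have hev := ((htop.eventually_gt_atTop 0).and (eventually_ge_atTop 1)).and
    ((hmain.eventually_le_const (show _ < d * β * Real.log d + η / 2 by linarith)).and
    ((hlow.eventually_const_lt (show β - δ < β by linarith)).and
    ((hupp.eventually_lt_const (show β < β + δ by linarith)).and
    (hsize.eventually_lt_const hdβ))))
  obtain ⟨A, hA⟩ := eventually_atTop.1 hev
  refine ⟨A, fun a ha n hn => ?_⟩
  obtain ⟨⟨hn0, ha1⟩, hm, hl, hu, hs⟩ := hA a ha
  have hnN : N a = n := hn.symm
  change 0 < (N a : ℝ) at hn0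
  rw [hnN] at hn0 hm hl hu hs
  have hdn : d ^ a + d ≤ n := by
    rw [← add_div, div_lt_one hn0] at hs
    exact_mod_cast hs.le
  obtain ⟨μ, H, T, hμ, hne, htail, hz⟩ := exists_hasTail d n a hd ha1 hdn
  refine ⟨μ, hμ, hne, rhoDiv_le_of_forall (by positivity) fun S hS => ?_⟩
  obtain ⟨j₀, hj₀⟩ := htail.exists_part hd ha1 hz hS
  have hn1 : n ≠ 0 := by rintro rfl; simp at hn0
  have hk := hS.1.sum_card
  refine (htail.rhoType_le hd ha1 hn1 hz _ hk).trans ?_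
  have hent := sum_negMulLog_ge (p := fun j => ((S j).card : ℝ) / n) (η := η / (2 * d)) (δ := δ)
    (by rw [← Finset.sum_div, div_eq_one_iff_eq hn0.ne']; exact_mod_cast hk) hδ
    (fun y hy => h₁ y (hy.trans_le (min_le_left _ _))) (fun y hy => h₂ y (hy.trans_le hdδ)) j₀
    (fun j hj => by
      obtain ⟨hlo, hup⟩ := hj₀ j hj
      have e1 : (d : ℝ) ^ a / n / d ≤ (S j).card / n := by
        rw [div_right_comm]; exact div_le_div_of_nonneg_right hlo hn0.le
      have e2 : ((S j).card : ℝ) / n ≤ (d : ℝ) ^ a / n / d + d / n := by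
        rw [div_right_comm, ← add_div]; exact div_le_div_of_nonneg_right hup hn0.le
      rw [abs_lt]
      constructor <;> linarith)
  rw [Real.rpow_def_of_pos two_pos, Real.exp_le_exp]
  have hf := fdFun_mul_log_two d β
  have hdη : d * (η / (2 * d)) = η / 2 := by field_simp
  rw [hdη] at hent
  have e3 : ((d : ℝ) ^ a + d) * Real.log d + d * (Real.log n + 1) =
      n * (((d : ℝ) ^ a / n + d / n) * Real.log d + (d * (Real.log n / n) + d / n)) := by
    field_simp
  rw [e3, ← mul_sub, ← mul_assoc, mul_comm _ (n : ℝ)]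
  refine mul_le_mul_of_nonneg_left ?_ hn0.le
  rw [mul_comm (Real.log 2), add_mul (fdFun d β), hf]
  linarith
end

section
/- Fix an integer d ≥ 2. For every ε > 0 there exists N ∈ ℕ such that for every n ≥ N and every non-constant d-adic distribution μ on X_n, there exists β ∈ (0, 1/(d−1)] with ρ(Div(μ)) ≥ 2^{(f_d(β)−ε)·n}. -/
section EquitableDivision

open Finset

/-- Rearranging `f` inside the fibres of `lab` produces at least as many functions as the
product of the corresponding multinomial coefficients. -/
lemma prod_factorial_le_mul_card_image {α ι κ : Type*} [Fintype α] [DecidableEq α] [Fintype ι]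
    [DecidableEq ι] [Fintype κ] [DecidableEq κ] (lab : α → ι) (f : α → κ) :
    ∏ i, (#{a | lab a = i}).factorial ≤
      (∏ i, ∏ j, (#{a | lab a = i ∧ f a = j}).factorial) *
        #(({σ : Equiv.Perm α | lab ∘ σ = lab} : Finset _).image
          (fun σ : Equiv.Perm α => f ∘ σ)) := by
  have h1 : ∏ i, (#{a | lab a = i}).factorial
      = #({σ : Equiv.Perm α | lab ∘ σ = lab} : Finset _) := by
    rw [← Fintype.card_subtype, DomMulAct.stabilizer_card]
    simp [Fintype.card_subtype]
  have h2 : ∏ i, ∏ j, (#{a | lab a = i ∧ f a = j}).factorial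
      = #({σ : Equiv.Perm α | (fun a => (lab a, f a)) ∘ σ = fun a => (lab a, f a)} : Finset _) := by
    rw [← Fintype.card_subtype, DomMulAct.stabilizer_card, Fintype.prod_prod_type]
    simp [Fintype.card_subtype]
  rw [h1, h2]
  apply card_le_mul_card_image
  intro g hg
  obtain ⟨τ, hτ, rfl⟩ := mem_image.1 hg
  apply card_le_card_of_injOn (fun σ => σ * τ⁻¹)
  · intro σ hσ
    simp only [coe_filter, mem_filter, mem_univ, true_and, Set.mem_ofPred_eq] at hσ hτ ⊢
    funext a
    have e1 := congrFun hσ.1 (τ⁻¹ a)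
    have e2 := congrFun hσ.2 (τ⁻¹ a)
    have e3 := congrFun hτ (τ⁻¹ a)
    have e4 : τ (τ⁻¹ a) = a := τ.apply_symm_apply a
    simp only [Function.comp_apply, e4] at e1 e2 e3
    simp only [Function.comp_apply, Equiv.Perm.mul_apply, e1, e2, e3]
  · intro σ _ σ' _ h
    simpa using h

lemma multinomial_mul_prod_pow_le_one {d n : ℕ} (k : Fin d → ℕ) (hk : ∑ j, k j = n)
    (q : Fin d → ℝ) (hq : ∀ j, 0 ≤ q j) (hq1 : ∑ j, q j = 1) :
    (Nat.multinomial univ k : ℝ) * ∏ j, q j ^ k j ≤ 1 := by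
  have h := sum_pow_eq_sum_piAntidiag (univ : Finset (Fin d)) q n
  rw [hq1, one_pow] at h
  rw [h]
  exact single_le_sum (f := fun k => (Nat.multinomial univ k : ℝ) * ∏ j, q j ^ k j)
    (fun k _ => mul_nonneg (Nat.cast_nonneg _) (prod_nonneg fun j _ => pow_nonneg (hq j) _))
    (by simp [hk])

lemma rhoType_le_rhoDiv {d n : ℕ} (μ : Fin n → ℝ) (k : Fin d → ℕ) (hk : ∑ j, k j = n) :
    rhoType d n μ k ≤ rhoDiv d n μ := by
  refine le_csSup ?_ ⟨k, hk, rfl⟩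
  apply Set.Finite.bddAbove
  have : {r | ∃ k : Fin d → ℕ, ∑ j, k j = n ∧ r = rhoType d n μ k}
      = ((piAntidiag univ n).image (rhoType d n μ) : Finset ℝ) := by
    ext r
    simp [eq_comm]
  rw [this]
  exact finite_toSet _

lemma card_mul_prod_pow_le_rhoDiv {d n : ℕ} (μ : Fin n → ℝ) (F : Finset (Fin n → Fin d))
    (k : Fin d → ℕ) (hF : ∀ f ∈ F, ∀ j, ∑ x with f x = j, μ x = 1 / (d : ℝ))
    (hFk : ∀ f ∈ F, ∀ j, #{x | f x = j} = k j) (hk : ∑ j, k j = n)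
    (q : Fin d → ℝ) (hq : ∀ j, 0 ≤ q j) (hq1 : ∑ j, q j = 1) :
    (#F : ℝ) * ∏ j, q j ^ k j ≤ rhoDiv d n μ := by
  refine le_trans ?_ (rhoType_le_rhoDiv μ k hk)
  have hm : (0 : ℝ) < Nat.multinomial univ k := by exact_mod_cast Nat.multinomial_pos _ _
  have hcard : #F ≤ {S : Fin d → Finset (Fin n) | MemDiv d n μ S ∧ ∀ j, #(S j) = k j}.ncard := by
    let Φ : (Fin n → Fin d) → Fin d → Finset (Fin n) := fun f j => {x | f x = j}
    have hΦ : Function.Injective Φ := by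
      intro f g h
      funext x
      have : x ∈ Φ g (f x) := by rw [← h]; simp [Φ]
      simpa [Φ, eq_comm] using this
    rw [← card_image_of_injective F hΦ, ← Set.ncard_coe_finset]
    apply Set.ncard_le_ncard _ (Set.toFinite _)
    intro S hS
    obtain ⟨f, hf, rfl⟩ := mem_image.1 (mem_coe.1 hS)
    refine ⟨⟨⟨fun j j' hj => ?_, ?_⟩, hF f hf⟩, hFk f hf⟩
    · rw [Finset.disjoint_left]
      intro x h1 h2
      simp only [Φ, mem_filter, mem_univ, true_and] at h1 h2
      exact hj (h1.symm.trans h2)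
    · ext x
      simp [Φ]
  rw [rhoType, le_div_iff₀ hm]
  have h1 := multinomial_mul_prod_pow_le_one k hk q hq hq1
  calc ((#F : ℝ) * ∏ j, q j ^ k j) * Nat.multinomial univ k
      = #F * (Nat.multinomial univ k * ∏ j, q j ^ k j) := by ring
    _ ≤ #F * 1 := by gcongr
    _ ≤ (_ : ℕ) := by rw [mul_one]; exact_mod_cast hcard

/-- A labelling whose classes have constant `μ`-value yields a lower bound for `ρ(Div μ)`,
obtained by rearranging a given division inside each class. -/
lemma prod_mul_prod_le_rhoDiv {d n : ℕ} (μ : Fin n → ℝ) (f : Fin n → Fin d)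
    (hf : ∀ j, ∑ x with f x = j, μ x = 1 / (d : ℝ)) {ι : Type*} [Fintype ι] [DecidableEq ι]
    (lab : Fin n → Option ι) (hlab : ∀ x y i, lab x = some i → lab y = some i → μ x = μ y)
    (q : Fin d → ℝ) (hq : ∀ j, 0 ≤ q j) (hq1 : ∑ j, q j = 1) :
    (∏ i, ((#{x | lab x = some i}).factorial : ℝ) /
      ∏ j, ((#{x | lab x = some i ∧ f x = j}).factorial : ℝ)) * ∏ x, q (f x) ≤ rhoDiv d n μ := by
  let lab' : Fin n → Fin n ⊕ ι := fun x => (lab x).elim (Sum.inl x) Sum.inr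
  have hl1 : ∀ x y, lab' x = Sum.inl y → x = y := by
    intro x y h
    rcases hx : lab x with _ | i <;> simp_all [lab']
  have hl2 : ∀ x i, lab' x = Sum.inr i ↔ lab x = some i := by
    intro x i
    rcases hx : lab x with _ | i' <;> simp [lab', hx]
  have hcount := prod_factorial_le_mul_card_image lab' f
  set F := ({σ : Equiv.Perm (Fin n) | lab' ∘ σ = lab'} : Finset _).image
    (fun σ : Equiv.Perm (Fin n) => f ∘ σ) with hF
  have hμ : ∀ σ : Equiv.Perm (Fin n), lab' ∘ σ = lab' → ∀ x, μ (σ x) = μ x := by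
    intro σ hσ x
    have h := congrFun hσ x
    rcases hx : lab x with _ | i
    · have h' : lab' x = Sum.inl x := by simp [lab', hx]
      rw [Function.comp_apply, h'] at h
      rw [hl1 _ _ h]
    · have h' := (hl2 x i).2 hx
      rw [Function.comp_apply, h', hl2] at h
      exact hlab _ _ i h hx
  have hmain := card_mul_prod_pow_le_rhoDiv μ F (fun j => #{x | f x = j}) (by
      intro g hg j
      obtain ⟨σ, hσ, rfl⟩ := mem_image.1 hg
      rw [← hf j, sum_filter, sum_filter]
      apply Fintype.sum_equiv σ
      intro x
      simp [hμ σ (by simpa using hσ)]) (by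
      intro g hg j
      obtain ⟨σ, hσ, rfl⟩ := mem_image.1 hg
      simp only [card_filter]
      exact Fintype.sum_equiv σ _ _ (fun x => by simp)) (by
      rw [← card_eq_sum_card_fiberwise (fun x _ => mem_univ (f x))]; simp) q hq hq1
  refine le_trans ?_ hmain
  have hprod : ∏ j, q j ^ #{x | f x = j} = ∏ x, q (f x) := by
    rw [← prod_fiberwise univ f]
    refine prod_congr rfl fun j _ => ?_
    rw [← prod_const]
    refine prod_congr rfl fun x hx => ?_
    simp_all
  rw [hprod]
  apply mul_le_mul_of_nonneg_right _ (prod_nonneg fun x _ => hq _)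
  rw [prod_div_distrib, div_le_iff₀ (by positivity)]
  rw [Fintype.prod_sum_type, Fintype.prod_sum_type] at hcount
  have hone : ∏ y : Fin n, ∏ j : Fin d,
      (#{a | lab' a = Sum.inl y ∧ f a = j}).factorial = 1 := by
    refine prod_eq_one fun y _ => prod_eq_one fun j _ => ?_
    rw [Nat.factorial_eq_one]
    refine card_le_one.2 fun a ha b hb => ?_
    simp only [mem_filter, mem_univ, true_and] at ha hb
    rw [hl1 _ _ ha.1, hl1 _ _ hb.1]
  rw [hone, one_mul] at hcount
  simp only [hl2] at hcount
  have h0 : 1 ≤ ∏ y : Fin n, (#{a | lab' a = Sum.inl y}).factorial :=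
    Finset.one_le_prod' fun y _ => Nat.factorial_pos _
  have := (Nat.le_mul_of_pos_left _ h0).trans hcount
  rw [mul_comm]
  exact_mod_cast this

lemma factorial_le_pow_mul_exp (m : ℕ) :
    (m.factorial : ℝ) ≤ (m + 1) * (m : ℝ) ^ m * Real.exp (1 - m) := by
  rcases Nat.eq_zero_or_pos m with rfl | hm
  · simp
  · have key : (m.factorial : ℝ) ≤ m * (m : ℝ) ^ m * Real.exp (1 - m) := by
      induction m, hm using Nat.le_induction with
      | base => simp
      | succ k hk ih =>
        have hk' : (0 : ℝ) < k := by exact_mod_cast hk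
        have h1 : (k : ℝ) ^ (k + 1) * Real.exp 1 ≤ ((k : ℝ) + 1) ^ (k + 1) := by
          have h2 : Real.exp 1 ≤ (1 + 1 / (k : ℝ)) ^ (k + 1) := by
            rw [← Real.rpow_natCast, Real.rpow_def_of_pos (by positivity)]
            apply Real.exp_le_exp.2
            have h3 := Real.one_sub_inv_le_log_of_pos (x := 1 + 1 / (k : ℝ)) (by positivity)
            have h4 : 1 - (1 + 1 / (k : ℝ))⁻¹ = 1 / ((k : ℝ) + 1) := by field_simp; ring
            rw [h4, div_le_iff₀ (by positivity)] at h3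
            push_cast
            exact h3
          calc (k : ℝ) ^ (k + 1) * Real.exp 1 ≤ (k : ℝ) ^ (k + 1) * (1 + 1 / (k : ℝ)) ^ (k + 1) := by
                gcongr
            _ = ((k : ℝ) + 1) ^ (k + 1) := by
                rw [← mul_pow]; congr 1; field_simp
        have h5 : Real.exp (1 - (k : ℝ)) = Real.exp (1 - ((k + 1 : ℕ) : ℝ)) * Real.exp 1 := by
          rw [← Real.exp_add]; congr 1; push_cast; ring
        rw [Nat.factorial_succ]
        push_cast at h5 ⊢
        calc ((k : ℝ) + 1) * k.factorial ≤ (k + 1) * (k * (k : ℝ) ^ k * Real.exp (1 - k)) := by gcongr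
          _ = (k + 1) * ((k : ℝ) ^ (k + 1) * Real.exp 1) * Real.exp (1 - (k + 1)) := by
              rw [h5]; ring
          _ ≤ (k + 1) * ((k : ℝ) + 1) ^ (k + 1) * Real.exp (1 - (k + 1)) := by gcongr
    refine key.trans ?_
    gcongr
    linarith

lemma pow_mul_exp_neg_le_factorial (m : ℕ) :
    (m : ℝ) ^ m * Real.exp (-m) ≤ m.factorial := by
  have h := Real.pow_div_factorial_le_exp (m : ℝ) (by positivity) m
  rw [div_le_iff₀ (by positivity)] at h
  rw [Real.exp_neg, ← div_eq_mul_inv, div_le_iff₀ (Real.exp_pos _), mul_comm (m.factorial : ℝ)]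
  exact h

lemma mul_log_le_binEntropy {d : ℕ} (hd : 2 ≤ d) {α : ℝ} (h1 : 1 / (d : ℝ) ≤ α) (h2 : α ≤ 1) :
    (1 - α) * ((d : ℝ) / (d - 1) * Real.log d - Real.log (d - 1)) ≤ Real.binEntropy α := by
  have hd' : (2 : ℝ) ≤ d := by exact_mod_cast hd
  have hd0 : (0 : ℝ) < d := by linarith
  have hd1 : (0 : ℝ) < d - 1 := by linarith
  have hinv : 1 / (d : ℝ) ≤ 1 := by rw [div_le_one hd0]; linarith
  set s := (1 - α) * (d / (d - 1)) with hs
  have hs0 : 0 ≤ s := by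
    have : 0 ≤ 1 - α := by linarith
    positivity
  have hs1 : s ≤ 1 := by
    rw [hs, mul_div_assoc', div_le_one hd1]
    rw [div_le_iff₀ hd0] at h1
    linarith
  have hc := Real.strictConcave_binEntropy.concaveOn.2 (x := 1 / (d : ℝ)) (y := 1)
    ⟨by positivity, hinv⟩ ⟨by norm_num, le_refl _⟩ hs0 (sub_nonneg.2 hs1) (by ring)
  have hα : s • (1 / (d : ℝ)) + (1 - s) • 1 = α := by
    simp only [smul_eq_mul, hs]
    field_simp
    ring
  rw [hα, Real.binEntropy_one, smul_zero, add_zero, smul_eq_mul] at hc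
  refine le_trans (le_of_eq ?_) hc
  have h3 : 1 - 1 / (d : ℝ) = (d - 1) / d := by field_simp
  rw [Real.binEntropy, h3, one_div, inv_inv, inv_div, Real.log_div hd0.ne' hd1.ne', hs]
  field_simp
  ring

/-- The minimiser of `fdFun d`, together with the entropy inequality it satisfies. -/
lemma exists_beta {d : ℕ} (hd : 2 ≤ d) : ∃ β p : ℝ, 0 < β ∧ β ≤ 1 / ((d : ℝ) - 1) ∧ 0 < p ∧ p < 1 ∧
    fdFun d β = Real.logb 2 p ∧ ∀ c Y : ℕ, c + Y ≤ d * c →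
      p ^ (c + Y) * ((c : ℝ) ^ c * (Y : ℝ) ^ Y) ≤ ((c : ℝ) + Y) ^ (c + Y) * (p ^ c * (1 - p) ^ Y) := by
  have hd' : (2 : ℝ) ≤ d := by exact_mod_cast hd
  have hd0 : (0 : ℝ) < d := by linarith
  have hd1 : (0 : ℝ) < d - 1 := by linarith
  set D : ℝ := (d : ℝ) ^ ((d : ℝ) / (d - 1)) with hD
  have hD0 : 0 < D := Real.rpow_pos_of_pos hd0 _
  have hlogD : Real.log D = (d : ℝ) / (d - 1) * Real.log d := Real.log_rpow hd0 _
  have hs : 0 < (d : ℝ) - 1 + D := by linarith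
  set β : ℝ := 1 / (d - 1 + D) with hβ
  have hβ0 : 0 < β := by positivity
  have hp : 1 - ((d : ℝ) - 1) * β = D * β := by rw [hβ]; field_simp; ring
  have hp0 : 0 < D * β := by positivity
  have hq : 1 - D * β = (d - 1) * β := by linarith
  have hq0 : 0 < (d - 1) * β := by positivity
  have hlogp : Real.log (D * β) = (d : ℝ) / (d - 1) * Real.log d + Real.log β := by
    rw [Real.log_mul hD0.ne' hβ0.ne', hlogD]
  have hlogq : Real.log ((d - 1) * β) = Real.log (d - 1) + Real.log β :=
    Real.log_mul hd1.ne' hβ0.ne'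
  refine ⟨β, D * β, hβ0, ?_, hp0, by linarith, ?_, ?_⟩
  · rw [hβ]
    exact one_div_le_one_div_of_le hd1 (by linarith)
  · rw [fdFun, hp]
    simp only [Real.logb]
    rw [one_div, one_div, Real.log_inv, Real.log_inv, hlogp]
    have hl2 : Real.log 2 ≠ 0 := (Real.log_pos (by norm_num)).ne'
    field_simp
    have e : D * β = 1 - ((d : ℝ) - 1) * β := hp.symm
    linear_combination (d * Real.log d + Real.log β * (d - 1)) * e
  · intro c Y hcY
    rcases Nat.eq_zero_or_pos Y with rfl | hY
    · simp [mul_comm]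
    have hc : 0 < c := by
      rcases Nat.eq_zero_or_pos c with rfl | h
      · omega
      · exact h
    have hc' : (0 : ℝ) < c := by exact_mod_cast hc
    have hY' : (0 : ℝ) < Y := by exact_mod_cast hY
    have hX : (0 : ℝ) < c + Y := by positivity
    have hcY' : (c : ℝ) + Y ≤ d * c := by exact_mod_cast hcY
    have hent := mul_log_le_binEntropy hd (α := c / (c + Y))
      (by rw [div_le_div_iff₀ hd0 hX]; linarith) (by rw [div_le_one hX]; linarith)
    have h1 : 1 - (c : ℝ) / (c + Y) = Y / (c + Y) := by field_simp; ring
    rw [Real.binEntropy, h1, inv_div, inv_div, Real.log_div hX.ne' hc'.ne',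
      Real.log_div hX.ne' hY'.ne'] at hent
    have hent' : Y * ((d : ℝ) / (d - 1) * Real.log d - Real.log (d - 1)) ≤
        c * (Real.log (c + Y) - Real.log c) + Y * (Real.log (c + Y) - Real.log Y) := by
      have := mul_le_mul_of_nonneg_left hent hX.le
      field_simp at this ⊢
      linarith
    rw [hq, ← Real.log_le_log_iff (by positivity) (by positivity),
      Real.log_mul (by positivity) (by positivity), Real.log_mul (by positivity) (by positivity),
      Real.log_mul (by positivity) (by positivity), Real.log_mul (by positivity) (by positivity)]
    simp only [Real.log_pow]
    rw [hlogp, hlogq]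
    push_cast
    linarith

lemma level_bound {d : ℕ} (o : Fin d) (c : Fin d → ℕ) (q : Fin d → ℝ) {p z : ℝ} (hp0 : 0 < p)
    (hp1 : p < 1)
    (hKL : ∀ c Y : ℕ, c + Y ≤ d * c →
      p ^ (c + Y) * ((c : ℝ) ^ c * (Y : ℝ) ^ Y) ≤ ((c : ℝ) + Y) ^ (c + Y) * (p ^ c * (1 - p) ^ Y))
    (hq : ∀ j, 0 ≤ q j) (hqo : q o = p) (hz0 : 0 ≤ z)
    (hz : z ≤ (∑ j ∈ univ.erase o, (c j : ℝ)) + d)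
    (hcq : ∀ j ≠ o, c j * (1 - p) ≤ q j * z) (hmax : ∀ j, c j ≤ c o) :
    p ^ (∑ j, c j) ≤ (((∑ j, c j).factorial : ℝ) / ∏ j, ((c j).factorial : ℝ)) *
      (∏ j, q j ^ c j) * (Real.exp (2 * d) * (((∑ j, c j : ℕ) : ℝ) + 1) ^ d) := by
  set Y := ∑ j ∈ univ.erase o, c j with hY
  have hX : ∑ j, c j = c o + Y := (add_sum_erase _ _ (mem_univ o)).symm
  have hXmax : c o + Y ≤ d * c o := by
    rw [← hX]
    calc ∑ j, c j ≤ ∑ _j : Fin d, c o := sum_le_sum fun j _ => hmax j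
      _ = d * c o := by simp
  have hkl := hKL _ _ hXmax
  have hcX : ∀ j, (c j : ℝ) ≤ ((∑ j, c j : ℕ) : ℝ) := fun j => by
    exact_mod_cast single_le_sum (f := c) (fun _ _ => Nat.zero_le _) (mem_univ j)
  have hfac : ∏ j, ((c j).factorial : ℝ) ≤
      ((((∑ j, c j : ℕ) : ℝ) + 1) ^ d * ((c o : ℝ) ^ c o * ∏ j ∈ univ.erase o, (c j : ℝ) ^ c j)) *
        Real.exp (d - (∑ j, c j : ℕ)) := by
    calc ∏ j, ((c j).factorial : ℝ)
        ≤ ∏ j, (((((∑ j, c j : ℕ) : ℝ) + 1) * (c j : ℝ) ^ c j) * Real.exp (1 - c j)) := by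
          refine prod_le_prod (fun j _ => by positivity) fun j _ => ?_
          refine (factorial_le_pow_mul_exp _).trans ?_
          gcongr
          exact_mod_cast hcX j
      _ = _ := by
          rw [prod_mul_distrib, prod_mul_distrib, prod_const, ← Real.exp_sum,
            mul_prod_erase univ (fun j => (c j : ℝ) ^ c j) (mem_univ o)]
          simp
  have hzY : z ^ Y ≤ (Y : ℝ) ^ Y * Real.exp d := by
    have h1 : z ≤ (Y : ℝ) + d := by rw [hY]; push_cast; exact hz
    rcases Nat.eq_zero_or_pos Y with h0 | h0
    · rw [h0]; simp
    · have h0' : (0 : ℝ) < Y := by exact_mod_cast h0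
      calc z ^ Y ≤ ((Y : ℝ) * Real.exp (d / Y)) ^ Y := by
            gcongr
            refine h1.trans ?_
            have := Real.add_one_le_exp ((d : ℝ) / Y)
            calc (Y : ℝ) + d = Y * (d / Y + 1) := by field_simp; ring
              _ ≤ _ := by gcongr
        _ = _ := by
            rw [mul_pow, ← Real.exp_nat_mul]
            congr 2
            field_simp
  have hN : (∏ j ∈ univ.erase o, (c j : ℝ) ^ c j) * (1 - p) ^ Y ≤
      (∏ j ∈ univ.erase o, q j ^ c j) * z ^ Y := by
    rw [hY, ← prod_pow_eq_pow_sum, ← prod_pow_eq_pow_sum, ← prod_mul_distrib, ← prod_mul_distrib]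
    refine prod_le_prod (fun j _ => ?_) fun j hj => ?_
    · have : 0 ≤ 1 - p := by linarith
      positivity
    · rw [← mul_pow, ← mul_pow]
      apply pow_le_pow_left₀ _ (hcq j (ne_of_mem_erase hj))
      have : 0 ≤ 1 - p := by linarith
      positivity
  rw [← mul_prod_erase univ (fun j => q j ^ c j) (mem_univ o), hqo]
  rw [div_mul_eq_mul_div, div_mul_eq_mul_div, le_div_iff₀ (by positivity)]
  have hXf := pow_mul_exp_neg_le_factorial (∑ j, c j)
  rw [hX] at hfac hXf ⊢
  push_cast at hfac hXf ⊢
  set N := ∏ j ∈ univ.erase o, (c j : ℝ) ^ c j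
  set Q := ∏ j ∈ univ.erase o, q j ^ c j
  have hN0 : 0 ≤ N := prod_nonneg fun j _ => by positivity
  have hQ0 : 0 ≤ Q := prod_nonneg fun j _ => pow_nonneg (hq j) _
  have hYY : (0 : ℝ) < (Y : ℝ) ^ Y := by
    rcases Nat.eq_zero_or_pos Y with h0 | h0
    · rw [h0]; simp
    · positivity
  have hcore : p ^ (c o + Y) * ((c o : ℝ) ^ c o * N) ≤
      ((c o : ℝ) + Y) ^ (c o + Y) * p ^ c o * Q * Real.exp d := by
    refine le_of_mul_le_mul_right ?_ hYY
    calc p ^ (c o + Y) * ((c o : ℝ) ^ c o * N) * (Y : ℝ) ^ Y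
        = p ^ (c o + Y) * ((c o : ℝ) ^ c o * (Y : ℝ) ^ Y) * N := by ring
      _ ≤ ((c o : ℝ) + Y) ^ (c o + Y) * (p ^ c o * (1 - p) ^ Y) * N := by gcongr
      _ = ((c o : ℝ) + Y) ^ (c o + Y) * p ^ c o * (N * (1 - p) ^ Y) := by ring
      _ ≤ ((c o : ℝ) + Y) ^ (c o + Y) * p ^ c o * (Q * z ^ Y) := by gcongr
      _ ≤ ((c o : ℝ) + Y) ^ (c o + Y) * p ^ c o * (Q * ((Y : ℝ) ^ Y * Real.exp d)) := by gcongr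
      _ = _ := by ring
  have hexp : Real.exp (d - ((c o : ℝ) + Y)) * Real.exp d
      = Real.exp (-((c o : ℝ) + Y)) * Real.exp (2 * d) := by
    rw [← Real.exp_add, ← Real.exp_add]; congr 1; ring
  calc p ^ (c o + Y) * ∏ j, ((c j).factorial : ℝ)
      ≤ p ^ (c o + Y) * ((((c o : ℝ) + Y + 1) ^ d * ((c o : ℝ) ^ c o * N)) *
        Real.exp (d - ((c o : ℝ) + Y))) := by gcongr
    _ = (p ^ (c o + Y) * ((c o : ℝ) ^ c o * N)) * (((c o : ℝ) + Y + 1) ^ d *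
        Real.exp (d - ((c o : ℝ) + Y))) := by ring
    _ ≤ (((c o : ℝ) + Y) ^ (c o + Y) * p ^ c o * Q * Real.exp d) * (((c o : ℝ) + Y + 1) ^ d *
        Real.exp (d - ((c o : ℝ) + Y))) := by gcongr
    _ = (((c o : ℝ) + Y) ^ (c o + Y) * Real.exp (-((c o : ℝ) + Y))) * (p ^ c o * Q *
        (Real.exp (2 * d) * ((c o : ℝ) + Y + 1) ^ d)) := by
      linear_combination (((c o : ℝ) + Y) ^ (c o + Y) * p ^ c o * Q * ((c o : ℝ) + Y + 1) ^ d) * hexp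
    _ ≤ (c o + Y).factorial * (p ^ c o * Q *
        (Real.exp (2 * d) * ((c o : ℝ) + Y + 1) ^ d)) := by gcongr
    _ = _ := by ring

lemma pow_mul_le_rhoDiv_mul {d n A : ℕ} (hd : 2 ≤ d) (μ : Fin n → ℝ) (f : Fin n → Fin d)
    (hf : ∀ j, ∑ x with f x = j, μ x = 1 / (d : ℝ))
    (lab : Fin n → Option (Fin A)) (hlab : ∀ x y i, lab x = some i → lab y = some i → μ x = μ y)
    (o : Fin d) (rest : Finset (Fin n)) (hrest : ∀ x, lab x = none → x ∉ rest → f x = o)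
    (q : Fin d → ℝ) (hq : ∀ j, 0 ≤ q j) (hq1 : ∑ j, q j = 1) (hqo : 0 < q o)
    (hlevel : ∀ i, q o ^ #{x | lab x = some i} ≤ ((#{x | lab x = some i}).factorial : ℝ) /
      (∏ j, ((#{x | lab x = some i ∧ f x = j}).factorial : ℝ)) *
      (∏ j, q j ^ #{x | lab x = some i ∧ f x = j}) *
      (Real.exp (2 * d) * ((#{x | lab x = some i} : ℝ) + 1) ^ d))
    {η : ℝ} (hη0 : 0 < η) (hη1 : η < 1) :
    q o ^ n * ((1 - η) ^ n * (η / d) ^ #rest) ≤ rhoDiv d n μ *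
      ∏ i, (Real.exp (2 * d) * ((#{x | lab x = some i} : ℝ) + 1) ^ d) := by
  have hd' : (2 : ℝ) ≤ d := by exact_mod_cast hd
  have hd0 : (0 : ℝ) < d := by linarith
  have hqle : ∀ j, q j ≤ 1 := fun j => by
    rw [← hq1]; exact single_le_sum (fun j _ => hq j) (mem_univ j)
  have hηd : η / d ≤ 1 := by rw [div_le_one hd0]; linarith
  have hmain := prod_mul_prod_le_rhoDiv μ f hf lab hlab (fun j => (1 - η) * q j + η / d)
    (fun j => by have := hq j; have : 0 ≤ 1 - η := by linarith
                 positivity)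
    (by rw [sum_add_distrib, ← mul_sum, hq1]; simp; field_simp; ring)
  have hprod : (1 - η) ^ n * ((∏ x, if lab x = none then q o else q (f x)) * (η / d) ^ #rest) ≤
      ∏ x, ((1 - η) * q (f x) + η / d) := by
    have e1 : (1 - η) ^ n = ∏ _x : Fin n, (1 - η) := by simp
    have e2 : (η / d) ^ #rest = ∏ x : Fin n, if x ∈ rest then η / d else 1 := by
      rw [prod_ite_mem, univ_inter, prod_const]
    rw [e1, e2, ← prod_mul_distrib, ← prod_mul_distrib]
    have h1 : 0 ≤ 1 - η := by linarith
    have hηd0 : 0 < η / d := by positivity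
    refine prod_le_prod (fun x _ => ?_) fun x _ => ?_
    · have := hq (f x)
      split_ifs <;> positivity
    · by_cases hx : x ∈ rest
      · simp only [hx, if_true]
        have h2 : (if lab x = none then q o else q (f x)) ≤ 1 := by split_ifs <;> apply hqle
        have h3 : 0 ≤ (if lab x = none then q o else q (f x)) := by split_ifs <;> apply hq
        have h4 : (1 - η) * ((if lab x = none then q o else q (f x)) * (η / d)) ≤ η / d := by
          calc _ ≤ 1 * (1 * (η / d)) := by gcongr; linarith
            _ = _ := by ring
        have := mul_nonneg h1 (hq (f x))
        linarith
      · simp only [hx, if_false, mul_one]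
        have : (if lab x = none then q o else q (f x)) = q (f x) := by
          split_ifs with h
          · rw [hrest x h hx]
          · rfl
        rw [this]
        linarith
  have hfib : (∏ x, if lab x = none then q o else q (f x)) =
      q o ^ #{x | lab x = none} * ∏ i, ∏ j, q j ^ #{x | lab x = some i ∧ f x = j} := by
    rw [← prod_fiberwise univ lab, Fintype.prod_option]
    congr 1
    · rw [← prod_const]
      refine prod_congr rfl fun x hx => ?_
      simp_all
    · refine prod_congr rfl fun i _ => ?_
      rw [← prod_fiberwise _ f]
      refine prod_congr rfl fun j _ => ?_
      rw [filter_filter, ← prod_const]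
      refine prod_congr rfl fun x hx => ?_
      simp_all
  have hn : q o ^ n = q o ^ #{x | lab x = none} * ∏ i, q o ^ #{x | lab x = some i} := by
    rw [prod_pow_eq_pow_sum, ← pow_add, ← Fintype.sum_option (fun y => #{x | lab x = y}),
      ← card_eq_sum_card_fiberwise (fun x _ => mem_univ (lab x))]
    simp
  have hη' : 0 ≤ 1 - η := by linarith
  have hfinal : q o ^ n ≤ (∏ i, ((#{x | lab x = some i}).factorial : ℝ) /
      ∏ j, ((#{x | lab x = some i ∧ f x = j}).factorial : ℝ)) *
      (∏ x, if lab x = none then q o else q (f x)) *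
      ∏ i, (Real.exp (2 * d) * ((#{x | lab x = some i} : ℝ) + 1) ^ d) := by
    rw [hn, hfib]
    calc _ ≤ q o ^ #{x | lab x = none} * ∏ i, (((#{x | lab x = some i}).factorial : ℝ) /
          (∏ j, ((#{x | lab x = some i ∧ f x = j}).factorial : ℝ)) *
          (∏ j, q j ^ #{x | lab x = some i ∧ f x = j}) *
          (Real.exp (2 * d) * ((#{x | lab x = some i} : ℝ) + 1) ^ d)) := by
          gcongr with i
          exact hlevel i
      _ = _ := by
          have hcomm : ∀ a b c e : ℝ, a * (b * c * e) = b * (a * c) * e := by intros; ring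
          rw [prod_mul_distrib, prod_mul_distrib]
          exact hcomm _ _ _ _
  set W := ∏ i, (Real.exp (2 * d) * ((#{x | lab x = some i} : ℝ) + 1) ^ d)
  set M := ∏ i, ((#{x | lab x = some i}).factorial : ℝ) /
      ∏ j, ((#{x | lab x = some i ∧ f x = j}).factorial : ℝ)
  have hM : 0 ≤ M := prod_nonneg fun i _ => by positivity
  have hW : 0 ≤ W := prod_nonneg fun i _ => by positivity
  set H := ∏ x, if lab x = none then q o else q (f x)
  calc q o ^ n * ((1 - η) ^ n * (η / d) ^ #rest)
      ≤ M * H * W * ((1 - η) ^ n * (η / d) ^ #rest) :=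
        mul_le_mul_of_nonneg_right hfinal (by positivity)
    _ = M * ((1 - η) ^ n * (H * (η / d) ^ #rest)) * W := by ring
    _ ≤ M * (∏ x, ((1 - η) * q (f x) + η / d)) * W :=
        mul_le_mul_of_nonneg_right (mul_le_mul_of_nonneg_left hprod hM) hW
    _ ≤ _ := mul_le_mul_of_nonneg_right hmain hW

lemma exists_disjoint_subsets_card {α κ : Type*} [DecidableEq α] [Fintype κ] (E : Finset α)
    (c : κ → ℕ) (hc : ∑ j, c j ≤ #E) :
    ∃ S : κ → Finset α, (∀ j, S j ⊆ E) ∧ (∀ j j' x, x ∈ S j → x ∈ S j' → j = j') ∧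
      ∀ j, #(S j) = c j := by
  obtain ⟨e⟩ : Nonempty ((Σ j, Fin (c j)) ↪ E) :=
    Function.Embedding.nonempty_of_card_le (by simpa using hc)
  have he : ∀ j, Function.Injective fun k => ((e ⟨j, k⟩ : E) : α) := fun j k k' h => by
    have := e.injective (Subtype.ext h)
    simpa using this
  refine ⟨fun j => univ.image fun k => (e ⟨j, k⟩ : α), fun j x hx => ?_, fun j j' x hx hx' => ?_,
    fun j => ?_⟩
  · simp only [mem_image, mem_univ, true_and] at hx
    obtain ⟨k, rfl⟩ := hx
    exact (e _).2
  · simp only [mem_image, mem_univ, true_and] at hx hx'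
    obtain ⟨k, rfl⟩ := hx
    obtain ⟨k', hk'⟩ := hx'
    exact (congrArg Sigma.fst (e.injective (Subtype.ext hk'))).symm
  · rw [card_image_of_injective _ (he j)]
    simp

lemma exists_partial_labelling {α ι κ : Type*} [Fintype α] [DecidableEq α] [DecidableEq ι]
    [Fintype κ] [DecidableEq κ] (E : ι → Finset α)
    (hE : ∀ i i' x, x ∈ E i → x ∈ E i' → i = i') (c : ι → κ → ℕ) (hc : ∀ i, ∑ j, c i j ≤ #(E i)) :
    ∃ h : α → Option (ι × κ), (∀ x i j, h x = some (i, j) → x ∈ E i) ∧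
      ∀ i j, #{x | h x = some (i, j)} = c i j := by
  classical
  choose S hSE hSd hSc using fun i => exists_disjoint_subsets_card (E i) (c i) (hc i)
  have huniq : ∀ x (a b : ι × κ), x ∈ S a.1 a.2 → x ∈ S b.1 b.2 → a = b := by
    rintro x ⟨i, j⟩ ⟨i', j'⟩ h h'
    obtain rfl := hE i i' x (hSE _ _ h) (hSE _ _ h')
    obtain rfl := hSd i _ _ _ h h'
    rfl
  let h : α → Option (ι × κ) := fun x =>
    if hx : ∃ a : ι × κ, x ∈ S a.1 a.2 then some hx.choose else none
  have hh : ∀ x a, h x = some a ↔ x ∈ S a.1 a.2 := by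
    intro x a
    by_cases hx : ∃ a : ι × κ, x ∈ S a.1 a.2
    · simp only [h, hx, dif_pos, Option.some.injEq]
      refine ⟨fun e => e ▸ hx.choose_spec, fun e => huniq x _ _ hx.choose_spec e⟩
    · simp only [h, hx, dif_neg, not_false_iff, reduceCtorEq, false_iff]
      exact fun e => hx ⟨a, e⟩
  refine ⟨h, fun x i j hx => hSE i j ((hh _ _).1 hx), fun i j => ?_⟩
  rw [← hSc i j]
  congr 1
  ext x
  simp [hh]

/-- Greedy filling in order of decreasing weight, for weights forming a divisibility chain. -/
lemma exists_greedy_fill {α κ : Type*} [DecidableEq α] [Fintype κ] [DecidableEq κ] (o : κ)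
    (w : α → ℕ) (T : ℕ) (s : Finset α) (hw : ∀ x ∈ s, ∀ y ∈ s, w x ≤ w y → w x ∣ w y)
    (hT : ∀ x ∈ s, w x ∣ T) :
    ∃ f : α → κ, (∀ j ≠ o, ∑ x ∈ s with f x = j, w x ≤ T) ∧
      ((∀ j ≠ o, ∑ x ∈ s with f x = j, w x = T) ∨ ∀ x ∈ s, f x ≠ o) := by
  induction s using Finset.induction_on_min_value w with
  | empty => exact ⟨fun _ => o, by simp, by simp⟩
  | insert a s has hmin ih =>
    obtain ⟨f, hle, hf⟩ := ih (fun x hx y hy => hw x (mem_insert_of_mem hx) y (mem_insert_of_mem hy))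
      fun x hx => hT x (mem_insert_of_mem hx)
    have hupd : ∀ k j, ∑ x ∈ insert a s with Function.update f a k x = j, w x =
        (if k = j then w a else 0) + ∑ x ∈ s with f x = j, w x := by
      intro k j
      rw [sum_filter, sum_insert has, sum_filter]
      congr 1
      · simp
      · refine sum_congr rfl fun x hx => ?_
        rw [Function.update_of_ne (ne_of_mem_of_not_mem hx has)]
    by_cases hall : ∀ j ≠ o, ∑ x ∈ s with f x = j, w x = T
    · refine ⟨Function.update f a o, fun j hj => ?_, Or.inl fun j hj => ?_⟩ <;>
      · rw [hupd, if_neg hj.symm, zero_add]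
        simp [hall j hj]
    · have hfo := hf.resolve_left hall
      push Not at hall
      obtain ⟨k, hk, hkT⟩ := hall
      refine ⟨Function.update f a k, fun j hj => ?_, Or.inr fun x hx => ?_⟩
      · rw [hupd]
        split_ifs with hkj
        · subst hkj
          have hlt := lt_of_le_of_ne (hle k hk) hkT
          have hdvd : w a ∣ T - ∑ x ∈ s with f x = k, w x :=
            Nat.dvd_sub (hT a (mem_insert_self _ _)) (dvd_sum fun x hx =>
              hw a (mem_insert_self _ _) x (mem_insert_of_mem (mem_of_mem_filter x hx))
                (hmin x (mem_of_mem_filter x hx)))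
          have := Nat.le_of_dvd (by omega) hdvd
          omega
        · simpa using hle j hj
      · by_cases hxa : x = a
        · subst hxa; simpa using hk
        · rw [Function.update_of_ne hxa]
          exact hfo x (mem_of_mem_insert_of_ne hx hxa)

/-- Exact filling: every weight is dominated by the lighter ones, up to a common unit `g`. -/
lemma exists_exact_fill {α κ : Type*} [DecidableEq α] [Fintype κ] [DecidableEq κ]
    [Nonempty κ] (w : α → ℕ) {g : ℕ} (hg : 0 < g) (s : Finset α) (T : κ → ℕ) (hsum : ∑ x ∈ s, w x = ∑ j, T j)
    (hgw : ∀ x ∈ s, g ∣ w x) (hgT : ∀ j, g ∣ T j)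
    (hdom : ∀ x ∈ s, Fintype.card κ * w x ≤ ∑ y ∈ s with w y < w x, w y ∨ w x = g) :
    ∃ f : α → κ, ∀ j, ∑ x ∈ s with f x = j, w x = T j := by
  induction s using Finset.induction_on_max_value w generalizing T with
  | empty =>
    refine ⟨fun _ => Classical.arbitrary κ, fun j => ?_⟩
    have : ∑ j, T j = 0 := by rw [← hsum]; simp
    rw [sum_eq_zero_iff] at this
    simp [this j]
  | insert a s has hmax ih =>
    rw [sum_insert has] at hsum
    obtain ⟨k, hk⟩ : ∃ k, w a ≤ T k := by
      rcases hdom a (mem_insert_self _ _) with h | h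
      · by_contra! hlt
        have h1 : ∑ j, T j < ∑ _j : κ, w a := sum_lt_sum_of_nonempty univ_nonempty fun j _ => hlt j
        have h2 : ∑ y ∈ insert a s with w y < w a, w y ≤ ∑ y ∈ s, w y := by
          refine sum_le_sum_of_subset fun y hy => ?_
          simp only [mem_filter, mem_insert] at hy
          rcases hy.1 with rfl | h
          · exact absurd hy.2 (lt_irrefl _)
          · exact h
        simp only [sum_const, card_univ, smul_eq_mul] at h1
        omega
      · by_contra! hlt
        have h1 : ∑ j, T j = 0 := sum_eq_zero fun j _ => Nat.eq_zero_of_dvd_of_lt (hgT j) (h ▸ hlt j)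
        omega
    obtain ⟨f, hf⟩ := ih (Function.update T k (T k - w a))
      (by
        have h1 := add_sum_erase univ T (mem_univ k)
        have h2 : ∑ j ∈ univ.erase k, Function.update T k (T k - w a) j =
            ∑ j ∈ univ.erase k, T j := sum_congr rfl fun j hj => by
          rw [Function.update_of_ne (ne_of_mem_erase hj)]
        rw [← add_sum_erase univ (Function.update T k (T k - w a)) (mem_univ k),
          Function.update_self, h2]
        omega)
      (fun x hx => hgw x (mem_insert_of_mem hx))
      (fun j => by
        by_cases hj : j = k
        · subst hj
          simpa using Nat.dvd_sub (hgT j) (hgw a (mem_insert_self _ _))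
        · rw [Function.update_of_ne hj]; exact hgT j)
      (fun x hx => by
        refine (hdom x (mem_insert_of_mem hx)).imp_left fun h => ?_
        rwa [filter_insert, if_neg (not_lt.2 (hmax x hx))] at h)
    refine ⟨Function.update f a k, fun j => ?_⟩
    have h2 := hf j
    rw [sum_filter] at h2
    rw [sum_filter, sum_insert has, Function.update_self]
    rw [sum_congr rfl fun x hx => by
      rw [Function.update_of_ne (ne_of_mem_of_not_mem hx has)], h2]
    by_cases hj : j = k
    · subst hj; simp; omega
    · rw [Function.update_of_ne hj, if_neg (Ne.symm hj), zero_add]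

lemma sum_filter_lt_pow_add {α : Type*} {d : ℕ} (hd : 2 ≤ d) (s : Finset α) (w : α → ℕ)
    (hw : ∀ x ∈ s, w x = 0 ∨ ∃ e, w x = d ^ e) (φ : α → ℕ) (t k : ℕ) :
    ∑ x ∈ s with w x < d ^ (t + k), φ x = ∑ x ∈ s with w x < d ^ t, φ x +
      ∑ i ∈ range k, ∑ x ∈ s with w x = d ^ (t + i), φ x := by
  induction k with
  | zero => simp
  | succ k ih =>
    rw [sum_range_succ, ← add_assoc (∑ x ∈ s with w x < d ^ t, φ x), ← ih]
    simp only [sum_filter]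
    rw [← sum_add_distrib]
    refine sum_congr rfl fun x hx => ?_
    have hd0 : 0 < d := by omega
    rcases hw x hx with h | ⟨e, h⟩
    · rw [h]
      have h1 : 0 < d ^ (t + (k + 1)) := by positivity
      have h2 : 0 < d ^ (t + k) := by positivity
      rw [if_pos h1, if_pos h2, if_neg h2.ne, add_zero]
    · rw [h]
      simp only [Nat.pow_lt_pow_iff_right (show 1 < d by omega),
        Nat.pow_right_injective (show 2 ≤ d by omega) |>.eq_iff]
      split_ifs <;> omega

/-- Below some level `t` the total weight is small, while from there on it stays large; this
forces many elements in the levels between `t` and `τ`. -/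
lemma exists_threshold {α : Type*} {d K τ : ℕ} (hd : 2 ≤ d) (L : Finset α) (w : α → ℕ)
    (hw : ∀ x ∈ L, w x = 0 ∨ ∃ e < τ, w x = d ^ e) (hbig : K * d ^ τ < ∑ x ∈ L, w x) :
    ∃ t A, t + A = τ ∧ ∑ x ∈ L with w x < d ^ t, w x ≤ K * d ^ t ∧
      (∀ k, 0 < k → k ≤ A → K * d ^ (t + k) < ∑ x ∈ L with w x < d ^ (t + k), w x) ∧
      A * K ≤ #L := by
  have hd0 : 0 < d := by omega
  set M : ℕ → ℕ := fun i => ∑ x ∈ L with w x < d ^ i, w x with hM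
  have hM0 : M 0 ≤ K * d ^ 0 := by
    have : M 0 = 0 := sum_eq_zero fun x hx => by
      simp only [pow_zero, Nat.lt_one_iff, mem_filter] at hx
      exact hx.2
    omega
  have hMτ : M τ = ∑ x ∈ L, w x := by
    simp only [hM]
    rw [filter_true_of_mem]
    intro x hx
    rcases hw x hx with h | ⟨e, he, h⟩
    · rw [h]; positivity
    · rw [h]; exact Nat.pow_lt_pow_right (by omega) he
  set t := Nat.findGreatest (fun i => M i ≤ K * d ^ i) τ with ht
  have htM : M t ≤ K * d ^ t :=
    Nat.findGreatest_spec (P := fun i => M i ≤ K * d ^ i) (Nat.zero_le _) hM0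
  have htτ : t ≤ τ := Nat.findGreatest_le _
  have hgt : ∀ k, 0 < k → k ≤ τ - t → K * d ^ (t + k) < M (t + k) := fun k hk hkA => by
    have := Nat.findGreatest_is_greatest (P := fun i => M i ≤ K * d ^ i) (n := τ) (k := t + k)
      (by omega) (by omega)
    simpa using this
  refine ⟨t, τ - t, by omega, htM, hgt, ?_⟩
  set m : ℕ → ℕ := fun i => #{x ∈ L | w x = d ^ (t + i)} with hm
  have hpow : ∀ x ∈ L, w x = 0 ∨ ∃ e, w x = d ^ e := fun x hx =>
    (hw x hx).imp_right fun ⟨e, _, h⟩ => ⟨e, h⟩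
  have hMk : ∀ k, M (t + k + 1) = M (t + k) + m k * d ^ (t + k) := fun k => by
    have := sum_filter_lt_pow_add hd L w hpow w (t + k) 1
    simp only [range_one, sum_singleton, add_zero] at this
    simp only [hM, hm]
    rw [this, add_right_inj, card_eq_sum_ones, sum_mul]
    refine sum_congr rfl fun x hx => ?_
    rw [(mem_filter.1 hx).2, one_mul]
  have key : ∀ k ≤ τ - t, K * k * d ^ (t + k) + M (t + k) ≤
      K * d ^ (t + k) + d ^ (t + k) * ∑ i ∈ range k, m i := by
    intro k
    induction k with
    | zero => intro _; simpa using htM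
    | succ k ih =>
      intro hk
      have h1 := ih (by omega)
      have h2 := hgt (k + 1) (by omega) hk
      rw [← add_assoc, hMk k] at h2
      rw [← add_assoc, hMk k, sum_range_succ]
      obtain ⟨b, rfl⟩ : ∃ b, d = b + 2 := ⟨d - 2, by omega⟩
      rw [pow_succ] at h2 ⊢
      have h3 := Nat.mul_le_mul_left (b + 2) h1
      have h4 := Nat.zero_le (b * (M (t + k) + m k * (b + 2) ^ (t + k)))
      nlinarith
  have h1 := key (τ - t) le_rfl
  rw [show t + (τ - t) = τ by omega, hMτ] at h1
  have h2 : ∑ i ∈ range (τ - t), m i ≤ #L := by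
    have h3 := sum_filter_lt_pow_add hd L w hpow (fun _ => 1) t (τ - t)
    simp only [← card_eq_sum_ones] at h3
    have h4 := card_filter_le L fun x => w x < d ^ (t + (τ - t))
    have h5 : ∑ i ∈ range (τ - t), m i = ∑ i ∈ range (τ - t), #{x ∈ L | w x = d ^ (t + i)} := rfl
    omega
  refine le_trans ?_ h2
  have hdτ : 0 < d ^ τ := by positivity
  refine Nat.le_of_mul_le_mul_left ?_ hdτ
  nlinarith

lemma exists_rounding {d D : ℕ} (hD : 0 < D) (o : Fin d) (g : Fin d → ℕ) (hgo : ∀ j, g j ≤ g o)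
    (hlt : g o < ∑ j, g j) (m : ℕ) :
    ∃ (c : Fin d → ℕ) (z : ℝ), D * ∑ j, c j + m ≤ D * m ∧ D * m ≤ D * ∑ j, c j + m + d * D ∧
      (∀ j, D * (∑ j, g j) * c j ≤ (D - 1) * g j * m) ∧ 0 ≤ z ∧
      z ≤ (∑ j ∈ univ.erase o, (c j : ℝ)) + d ∧
      (∀ j ≠ o, (c j : ℝ) ≤ (g j : ℝ) / (∑ j ∈ univ.erase o, (g j : ℝ)) * z) ∧
      ∀ j, c j ≤ c o := by
  obtain ⟨b, rfl⟩ : ∃ b, D = b + 1 := ⟨D - 1, by omega⟩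
  set G := ∑ j, g j with hG
  have hG0 : 0 < G := by omega
  have hDG : 0 < (b + 1) * G := by positivity
  have hGo : (0 : ℝ) < ∑ j ∈ univ.erase o, (g j : ℝ) := by
    have h1 := add_sum_erase univ g (mem_univ o)
    have h2 : 0 < ∑ j ∈ univ.erase o, g j := by omega
    exact_mod_cast h2
  set H := ∑ j ∈ univ.erase o, (g j : ℝ)
  set c : Fin d → ℕ := fun j => (b * g j * m) / ((b + 1) * G) with hc
  have hc1 : ∀ j, (b + 1) * G * c j ≤ b * g j * m := fun j => Nat.mul_div_le _ _
  have hc2 : ∀ j, b * g j * m ≤ (b + 1) * G * (c j + 1) := fun j =>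
    (Nat.lt_mul_div_succ _ hDG).le
  have hG0' : (0 : ℝ) < G := by exact_mod_cast hG0
  have hsum1 : (b + 1) * ∑ j, c j ≤ b * m := by
    refine Nat.le_of_mul_le_mul_left ?_ hG0
    calc G * ((b + 1) * ∑ j, c j) = ∑ j, (b + 1) * G * c j := by rw [← mul_sum]; ring
      _ ≤ ∑ j, b * g j * m := sum_le_sum fun j _ => hc1 j
      _ = G * (b * m) := by rw [← sum_mul, ← mul_sum]; ring
  have hsum2 : b * m ≤ (b + 1) * (∑ j, c j + d) := by
    refine Nat.le_of_mul_le_mul_left ?_ hG0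
    calc G * (b * m) = ∑ j, b * g j * m := by rw [← sum_mul, ← mul_sum]; ring
      _ ≤ ∑ j, (b + 1) * G * (c j + 1) := sum_le_sum fun j _ => hc2 j
      _ = _ := by rw [← mul_sum, sum_add_distrib]; simp; ring
  refine ⟨c, H * (b * m) / (G * (b + 1)), by nlinarith, by nlinarith, hc1, by positivity, ?_,
    fun j _ => ?_, fun j => ?_⟩
  · calc H * (b * m) / (G * (b + 1))
        = ∑ j ∈ univ.erase o, ((b : ℝ) * g j * m) / ((b + 1) * G) := by
          rw [← sum_div, ← sum_mul, ← mul_sum]; congr 1 <;> ring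
      _ ≤ ∑ j ∈ univ.erase o, ((c j : ℝ) + 1) := sum_le_sum fun j _ => by
          rw [div_le_iff₀ (by positivity), mul_comm (_ + _ : ℝ)]
          exact_mod_cast hc2 j
      _ ≤ _ := by
          rw [sum_add_distrib]
          gcongr
          simp
  · have e : (g j : ℝ) / H * (H * (b * m) / (G * (b + 1))) = b * g j * m / ((b + 1) * G) := by
      field_simp
    rw [e, le_div_iff₀ (by positivity), mul_comm]
    exact_mod_cast hc1 j
  · exact Nat.div_le_div_right (by gcongr; exact hgo j)

set_option maxHeartbeats 1000000 in
/-- The light elements can be divided according to the targets `g`, so that up to few elements each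
weight class is divided in the proportions of the targets. -/
lemma exists_fill_below {α : Type*} [Fintype α] [DecidableEq α] {d D K τ : ℕ} (hd : 2 ≤ d)
    (hD : 0 < D) (hK : 2 * d * D ≤ K) (L : Finset α) (w : α → ℕ)
    (hw : ∀ x ∈ L, w x = 0 ∨ ∃ e < τ, w x = d ^ e) (o : Fin d) (g : Fin d → ℕ)
    (hgd : ∀ j, d ^ τ ∣ g j) (hgo : ∀ j, g j ≤ g o) (hgK : D * K * d ^ τ ≤ g o)
    (hlt : g o < ∑ j, g j) (hsum : ∑ x ∈ L, w x = ∑ j, g j) :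
    ∃ (f : α → Fin d) (A : ℕ) (lab : α → Option (Fin A)) (R : Finset α) (z : Fin A → ℝ),
      (∀ j, ∑ x ∈ L with f x = j, w x = g j) ∧ (∀ x i, lab x = some i → x ∈ L) ∧
      (∀ x y i, lab x = some i → lab y = some i → w x = w y) ∧
      (∀ x ∈ L, lab x = none → x ∉ R → f x = o) ∧
      (∀ i, 0 ≤ z i ∧
        z i ≤ (∑ j ∈ univ.erase o, (#{x | lab x = some i ∧ f x = j} : ℝ)) + d ∧
        (∀ j ≠ o, (#{x | lab x = some i ∧ f x = j} : ℝ) ≤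
          (g j : ℝ) / (∑ j ∈ univ.erase o, (g j : ℝ)) * z i) ∧
        ∀ j, #{x | lab x = some i ∧ f x = j} ≤ #{x | lab x = some i ∧ f x = o}) ∧
      A * K ≤ #L ∧ D * #R ≤ #L + d * D * A := by
  have hd0 : 0 < d := by omega
  have hdτ : 0 < d ^ τ := by positivity
  obtain ⟨t, A, hτ, htM, hgt, hAK⟩ := exists_threshold (K := K) hd L w hw (by
    rw [hsum]
    refine lt_of_le_of_lt (le_trans ?_ hgK) hlt
    rw [mul_assoc]
    exact Nat.le_mul_of_pos_left _ hD)
  have hpow : ∀ x ∈ L, w x = 0 ∨ ∃ e, w x = d ^ e := fun x hx =>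
    (hw x hx).imp_right fun ⟨e, _, h⟩ => ⟨e, h⟩
  have hinj : ∀ {a b : ℕ}, d ^ a = d ^ b → a = b := fun h => Nat.pow_right_injective hd h
  set m : ℕ → ℕ := fun i => #{x ∈ L | w x = d ^ (t + i)} with hm
  choose c z hc1 hc2 hc3 hz0 hz1 hcz hco using fun i : Fin A => exists_rounding hD o g hgo hlt (m i)
  obtain ⟨h, hhE, hhc⟩ := exists_partial_labelling
    (fun i : Fin A => {x ∈ L | w x = d ^ (t + (i : ℕ))})
    (fun i i' x hx hx' => by
      have := hinj ((mem_filter.1 hx).2.symm.trans (mem_filter.1 hx').2)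
      exact Fin.ext (by omega))
    c (fun i => Nat.le_of_mul_le_mul_left (le_of_add_le_left (hc1 i)) hD)
  simp only [mem_filter] at hhE
  have hhlow : ∀ x, w x < d ^ t → h x = none := fun x hx => by
    rcases hhx : h x with _ | ⟨i, j⟩
    · rfl
    · rw [(hhE x i j hhx).2] at hx
      exact absurd hx (not_lt.2 (Nat.pow_le_pow_right hd0 (by omega)))
  set R : Finset α := {x ∈ L | d ^ t ≤ w x ∧ h x = none} with hR
  set ρ : ℕ → ℕ := fun i => #{x ∈ R | w x = d ^ (t + i)} with hρ
  have hρc : ∀ i : Fin A, ρ i + ∑ j, c i j = m i := fun i => by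
    simp only [hm]
    rw [card_eq_sum_card_fiberwise (f := fun x => (h x).map Prod.snd) (t := univ)
      (fun x _ => mem_univ _), Fintype.sum_option]
    congr 1
    · simp only [hρ, hR]
      congr 1
      ext x
      simp only [mem_filter, Option.map_eq_none_iff]
      constructor
      · rintro ⟨⟨h1, _, h2⟩, h3⟩; exact ⟨⟨h1, h3⟩, h2⟩
      · rintro ⟨⟨h1, h3⟩, h2⟩
        exact ⟨⟨h1, by rw [h3]; exact Nat.pow_le_pow_right hd0 (by omega), h2⟩, h3⟩
    · refine sum_congr rfl fun j _ => ?_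
      rw [← hhc i j]
      congr 1
      ext x
      simp only [mem_filter, mem_univ, true_and, Option.map_eq_some_iff, Prod.exists]
      constructor
      · intro hx
        exact ⟨hhE x i j hx, i, j, hx, rfl⟩
      · rintro ⟨⟨_, hx⟩, i', j', hx', rfl⟩
        have := hinj (hx.symm.trans (hhE x i' j' hx').2)
        rw [hx', show i' = i from Fin.ext (by omega)]
  have hρm : ∀ i < A, m i ≤ D * ρ i ∧ D * ρ i ≤ m i + d * D := fun i hi => by
    have h1 := hρc ⟨i, hi⟩
    have h2 := hc1 ⟨i, hi⟩
    have h3 := hc2 ⟨i, hi⟩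
    simp only at h1 h2 h3
    rw [← h1, mul_add, h1] at h2 h3
    omega
  have hRL : R ⊆ L := filter_subset _ _
  have hRlow : ∀ φ : α → ℕ, ∑ x ∈ R with w x < d ^ t, φ x = 0 := fun φ => by
    rw [filter_false_of_mem fun x hx => not_lt.2 (mem_filter.1 hx).2.1, sum_empty]
  have hRk : ∀ k, ∑ x ∈ R with w x < d ^ (t + k), w x = ∑ i ∈ range k, ρ i * d ^ (t + i) :=
    fun k => by
      rw [sum_filter_lt_pow_add hd R w (fun x hx => hpow x (hRL hx)) w t k, hRlow, zero_add]
      refine sum_congr rfl fun i _ => ?_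
      rw [sum_congr rfl fun x hx => (mem_filter.1 hx).2, sum_const, smul_eq_mul]
  have hLk : ∀ k, ∑ x ∈ L with w x < d ^ (t + k), w x = ∑ x ∈ L with w x < d ^ t, w x +
      ∑ i ∈ range k, m i * d ^ (t + i) := fun k => by
    rw [sum_filter_lt_pow_add hd L w hpow w t k, add_right_inj]
    refine sum_congr rfl fun i _ => ?_
    rw [sum_congr rfl fun x hx => (mem_filter.1 hx).2, sum_const, smul_eq_mul]
  have hLτ : ∀ x ∈ L, w x < d ^ (t + A) := fun x hx => by
    rw [hτ]
    rcases hw x hx with hx | ⟨e, he, hx⟩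
    · rw [hx]; exact hdτ
    · rw [hx]; exact Nat.pow_lt_pow_right (by omega) he
  set Mt := ∑ x ∈ L with w x < d ^ t, w x with hMt
  have hG : ∑ j, g j = Mt + ∑ i ∈ range A, m i * d ^ (t + i) := by
    rw [← hsum, ← hLk, filter_true_of_mem hLτ]
  have hRsum : ∑ x ∈ R, w x = ∑ i ∈ range A, ρ i * d ^ (t + i) := by
    rw [← hRk, filter_true_of_mem fun x hx => hLτ x (hRL hx)]
  set W : Fin d → ℕ := fun j => ∑ i : Fin A, c i j * d ^ (t + (i : ℕ)) with hW
  have hWG : ∑ x ∈ R, w x + ∑ j, W j + Mt = ∑ j, g j := by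
    rw [hG, hRsum, sum_comm, sum_range, sum_range, ← sum_add_distrib, add_comm]
    congr 1
    refine sum_congr rfl fun i _ => ?_
    rw [← sum_mul, ← add_mul, hρc]
  have hWle : ∀ j, D * W j ≤ (D - 1) * g j := fun j => by
    refine Nat.le_of_mul_le_mul_left ?_ (show 0 < ∑ j, g j by omega)
    calc (∑ j, g j) * (D * W j) = ∑ i : Fin A, (D * (∑ j, g j) * c i j) * d ^ (t + (i : ℕ)) := by
          simp only [hW]
          rw [← mul_assoc, mul_sum]
          refine sum_congr rfl fun i _ => ?_
          ring
      _ ≤ ∑ i : Fin A, ((D - 1) * g j * m i) * d ^ (t + (i : ℕ)) :=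
          sum_le_sum fun i _ => Nat.mul_le_mul_right _ (hc3 i j)
      _ = (D - 1) * g j * ∑ i ∈ range A, m i * d ^ (t + i) := by
          rw [sum_range, mul_sum]
          refine sum_congr rfl fun i _ => ?_
          ring
      _ ≤ (D - 1) * g j * ∑ j, g j := Nat.mul_le_mul_left _ (by omega)
      _ = _ := by ring
  set low : Fin d → ℕ := fun j => if j = o then Mt else 0 with hlow
  have hTle : ∀ j, W j + low j ≤ g j := fun j => by
    refine Nat.le_of_mul_le_mul_left ?_ hD
    have h1 := hWle j
    obtain ⟨b, rfl⟩ : ∃ b, D = b + 1 := ⟨D - 1, by omega⟩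
    simp only [Nat.add_sub_cancel] at h1
    simp only [hlow]
    split_ifs with hj
    · subst hj
      have h2 : Mt ≤ K * d ^ τ :=
        htM.trans (Nat.mul_le_mul_left _ (Nat.pow_le_pow_right hd0 (by omega)))
      nlinarith
    · nlinarith
  have : Nonempty (Fin d) := ⟨o⟩
  obtain ⟨f₂, hf₂⟩ := exists_exact_fill (κ := Fin d) w (g := d ^ t) (by positivity) R
    (fun j => g j - (W j + low j))
    (by
      have h1 : ∑ j, (g j - (W j + low j)) + ∑ j, (W j + low j) = ∑ j, g j := by
        rw [← sum_add_distrib]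
        exact sum_congr rfl fun j _ => Nat.sub_add_cancel (hTle j)
      have h2 : ∑ j, low j = Mt := by simp [hlow]
      rw [sum_add_distrib] at h1
      omega)
    (fun x hx => by
      obtain ⟨h1, h2, _⟩ := mem_filter.1 hx
      have h3 : 0 < d ^ t := by positivity
      rcases hpow x h1 with h | ⟨e, h⟩
      · omega
      · rw [h] at h2 ⊢
        exact pow_dvd_pow _ ((Nat.pow_le_pow_iff_right (by omega)).1 h2))
    (fun j => by
      have hgt' : ∀ j, d ^ t ∣ g j := fun j => (pow_dvd_pow _ (by omega)).trans (hgd j)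
      have hlev : ∀ v : ℕ → ℕ, d ^ t ∣ ∑ i ∈ range A, v i * d ^ (t + i) := fun v =>
        dvd_sum fun i _ => dvd_mul_of_dvd_right (pow_dvd_pow _ (by omega)) _
      have hMtd : d ^ t ∣ Mt := by
        rw [Nat.dvd_add_iff_left (hlev m), ← hG]
        exact dvd_sum fun j _ => hgt' j
      refine Nat.dvd_sub (hgt' j) (dvd_add (dvd_sum fun i _ => ?_) ?_)
      · exact dvd_mul_of_dvd_right (pow_dvd_pow _ (by omega)) _
      · simp only [hlow]
        split_ifs
        · exact hMtd
        · exact dvd_zero _)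
    (fun x hx => by
      obtain ⟨h1, h2, _⟩ := mem_filter.1 hx
      have h3 : 0 < d ^ t := by positivity
      obtain ⟨e, he⟩ := (hpow x h1).resolve_left (by omega)
      have hte : t ≤ e := by
        rw [he] at h2
        exact (Nat.pow_le_pow_iff_right (by omega)).1 h2
      have heA : e < t + A := by
        have := hLτ x h1
        rw [he] at this
        exact (Nat.pow_lt_pow_iff_right (by omega)).1 this
      obtain ⟨i, rfl⟩ := Nat.exists_eq_add_of_le hte
      rcases Nat.eq_zero_or_pos i with rfl | hi
      · exact Or.inr he
      · left
        rw [he, hRk, Fintype.card_fin]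
        have h4 := hgt i hi (by omega)
        rw [hLk] at h4
        have h5 : ∑ k ∈ range i, m k * d ^ (t + k) ≤ D * ∑ k ∈ range i, ρ k * d ^ (t + k) := by
          rw [mul_sum]
          refine sum_le_sum fun k hk => ?_
          rw [← mul_assoc]
          exact Nat.mul_le_mul_right _ (hρm k (by have := mem_range.1 hk; omega)).1
        have h6 : 2 * d ^ t ≤ d ^ (t + i) := by
          rw [pow_add, mul_comm]
          refine Nat.mul_le_mul_left _ (hd.trans ?_)
          exact Nat.le_self_pow hi.ne' d
        refine Nat.le_of_mul_le_mul_left ?_ hD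
        have h7 := Nat.mul_le_mul_left K h6
        have h8 := Nat.mul_le_mul_right (d ^ (t + i)) hK
        nlinarith)
  let f : α → Fin d := fun x =>
    (h x).elim (if w x < d ^ t then o else f₂ x) Prod.snd
  have hfs : ∀ x p, h x = some p → f x = p.2 := fun x p hx => by simp [f, hx]
  have hfn : ∀ x, h x = none → f x = if w x < d ^ t then o else f₂ x := fun x hx => by
    simp [f, hx]
  have hlabc : ∀ i j, #{x | (h x).map Prod.fst = some i ∧ f x = j} = c i j := fun i j => by
    rw [← hhc]
    congr 1
    ext x
    simp only [mem_filter, mem_univ, true_and, Option.map_eq_some_iff, Prod.exists]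
    constructor
    · rintro ⟨⟨i', j', hx, rfl⟩, rfl⟩
      rw [hx, hfs _ _ hx]
    · intro hx
      exact ⟨⟨i, j, hx, rfl⟩, hfs _ _ hx⟩
  refine ⟨f, A, fun x => (h x).map Prod.fst, R, z, fun j => ?_, fun x i hx => ?_,
    fun x y i hx hy => ?_, fun x hx hxn hxR => ?_, fun i => ?_, hAK, ?_⟩
  · have hWsum : ∑ x ∈ L, (if ∃ i, h x = some (i, j) then w x else 0) = W j := by
      have h1 : ∀ i : Fin A, c i j * d ^ (t + (i : ℕ)) =
          ∑ x ∈ L, if h x = some (i, j) then w x else 0 := fun i => by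
        rw [← hhc i j, card_eq_sum_ones, sum_mul, ← sum_filter]
        refine sum_congr_of_eq_on_inter ?_ ?_ ?_
        · intro x hx hx'
          simp only [mem_filter, mem_univ, true_and] at hx hx'
          exact absurd ⟨(hhE _ _ _ hx).1, hx⟩ hx'
        · intro x hx hx'
          simp only [mem_filter, mem_univ, true_and] at hx hx'
          exact absurd hx.2 hx'
        · intro x hx _
          simp only [mem_filter, mem_univ, true_and] at hx
          rw [(hhE _ _ _ hx).2, one_mul]
      simp only [hW, h1]
      rw [sum_comm]
      refine sum_congr rfl fun x _ => ?_
      split_ifs with hx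
      · obtain ⟨i, hi⟩ := hx
        rw [hi]
        simp
      · push Not at hx
        simp [hx]
    have hlowsum : ∑ x ∈ L, (if j = o then if w x < d ^ t then w x else 0 else 0) = low j := by
      simp only [hlow, hMt]
      split_ifs
      · rw [sum_filter]
      · simp
    have hRs : ∑ x ∈ L, (if d ^ t ≤ w x ∧ h x = none then if f₂ x = j then w x else 0 else 0) =
        g j - (W j + low j) := by
      rw [← hf₂ j, sum_filter, hR, sum_filter]
    have h1 := hTle j
    rw [sum_filter, ← Nat.add_sub_cancel' h1, ← hRs, ← hWsum, ← hlowsum, ← sum_add_distrib,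
      ← sum_add_distrib]
    refine sum_congr rfl fun x hx => ?_
    rcases hhx : h x with _ | ⟨i', j'⟩
    · rw [hfn x hhx]
      by_cases hlt' : w x < d ^ t
      · simp [hlt', not_le.2 hlt', eq_comm]
      · simp [hlt', not_lt.1 hlt']
    · have hnlt : ¬ w x < d ^ t := fun hlt' => by simp [hhlow x hlt'] at hhx
      rw [hfs x _ hhx]
      simp [hnlt]
  · simp only [Option.map_eq_some_iff, Prod.exists] at hx
    obtain ⟨i', j', hx, _⟩ := hx
    exact (hhE _ _ _ hx).1
  · simp only [Option.map_eq_some_iff, Prod.exists] at hx hy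
    obtain ⟨i', j', hx, rfl⟩ := hx
    obtain ⟨i'', j'', hy, hii⟩ := hy
    rw [(hhE _ _ _ hx).2, (hhE _ _ _ hy).2, ← hii]
  · rw [Option.map_eq_none_iff] at hxn
    rw [hfn x hxn, if_pos]
    by_contra hcon
    exact hxR (mem_filter.2 ⟨hx, not_lt.1 hcon, hxn⟩)
  · simp only [hlabc]
    exact ⟨hz0 i, hz1 i, hcz i, hco i⟩
  · have hcard : ∀ S : Finset α, S ⊆ L → #S = ∑ x ∈ S with w x < d ^ t, 1 +
        ∑ i ∈ range A, #{x ∈ S | w x = d ^ (t + i)} := fun S hS => by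
      have := sum_filter_lt_pow_add hd S w (fun x hx => hpow x (hS hx)) (fun _ => 1) t A
      rw [filter_true_of_mem fun x hx => hLτ x (hS hx)] at this
      simpa only [← card_eq_sum_ones] using this
    have h1 := hcard R hRL
    have h2 := hcard L subset_rfl
    rw [hRlow fun _ => 1, zero_add] at h1
    have h3 : D * ∑ i ∈ range A, ρ i ≤ ∑ i ∈ range A, m i + d * D * A := by
      rw [mul_sum]
      calc _ ≤ ∑ i ∈ range A, (m i + d * D) :=
            sum_le_sum fun i hi => (hρm i (mem_range.1 hi)).2
        _ = _ := by rw [sum_add_distrib, sum_const, card_range, smul_eq_mul, mul_comm A]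
    rw [h1]
    refine h3.trans ?_
    rw [h2]
    simp only [hm]
    omega

/-- A distribution with weights powers of `d` has an equitable division which, apart from few
exceptional elements, divides each weight class in fixed proportions. -/
lemma exists_structured_division {α : Type*} [Fintype α] [DecidableEq α] {d D K V τ : ℕ}
    (hd : 2 ≤ d) (hD : 0 < D) (hK : 2 * d * D ≤ K) (hV : D * K ≤ d ^ V) (w : α → ℕ)
    (hw : ∀ x, w x = 0 ∨ ∃ e ≤ τ + V, w x = d ^ e) (hsum : ∑ x, w x = d ^ (τ + V + 1)) (o : Fin d) :
    ∃ (f : α → Fin d) (A : ℕ) (lab : α → Option (Fin A)) (R : Finset α) (r : Fin d → ℝ)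
      (z : Fin A → ℝ),
      (∀ j, ∑ x with f x = j, w x = d ^ (τ + V)) ∧
      (∀ x y i, lab x = some i → lab y = some i → w x = w y) ∧
      (∀ x, lab x = none → x ∉ R → f x = o) ∧
      (∀ j, 0 ≤ r j) ∧ (∑ j ∈ univ.erase o, r j = 1) ∧
      (∀ i, 0 ≤ z i ∧
        z i ≤ (∑ j ∈ univ.erase o, (#{x | lab x = some i ∧ f x = j} : ℝ)) + d ∧
        (∀ j ≠ o, (#{x | lab x = some i ∧ f x = j} : ℝ) ≤ r j * z i) ∧
        ∀ j, #{x | lab x = some i ∧ f x = j} ≤ #{x | lab x = some i ∧ f x = o}) ∧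
      A * K ≤ Fintype.card α ∧
      D * #R ≤ D * d ^ (V + 1) + Fintype.card α + d * D * A := by
  have hd0 : 0 < d := by omega
  set T := d ^ (τ + V) with hT
  set P : Finset α := {x | d ^ τ ≤ w x} with hP
  set L : Finset α := {x | ¬ d ^ τ ≤ w x} with hL
  have hPw : ∀ x ∈ P, ∃ e, τ ≤ e ∧ e ≤ τ + V ∧ w x = d ^ e := fun x hx => by
    have h1 : d ^ τ ≤ w x := (mem_filter.1 hx).2
    have h2 : 0 < d ^ τ := by positivity
    obtain ⟨e, he, h⟩ := (hw x).resolve_left (by omega)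
    rw [h] at h1
    exact ⟨e, (Nat.pow_le_pow_iff_right (by omega)).1 h1, he, h⟩
  have hPcard : #P ≤ d ^ (V + 1) := by
    refine Nat.le_of_mul_le_mul_right ?_ (show 0 < d ^ τ by positivity)
    calc #P * d ^ τ = ∑ _x ∈ P, d ^ τ := by simp
      _ ≤ ∑ x ∈ P, w x := sum_le_sum fun x hx => (mem_filter.1 hx).2
      _ ≤ ∑ x, w x := sum_le_univ_sum_of_nonneg fun _ => Nat.zero_le _
      _ = _ := by rw [hsum, ← pow_add]; congr 1; omega
  have hPL : ∑ x ∈ P, w x + ∑ x ∈ L, w x = d * T := by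
    rw [sum_filter_add_sum_filter_not, hsum, hT, pow_succ']
  obtain ⟨f₁, hf₁, hf₁'⟩ := exists_greedy_fill o w T P
    (fun x hx y hy hxy => by
      obtain ⟨e, _, _, he⟩ := hPw x hx
      obtain ⟨e', _, _, he'⟩ := hPw y hy
      rw [he, he'] at hxy ⊢
      exact pow_dvd_pow _ ((Nat.pow_le_pow_iff_right (by omega)).1 hxy))
    (fun x hx => by
      obtain ⟨e, _, he, h⟩ := hPw x hx
      rw [h]
      exact pow_dvd_pow _ he)
  have hcomb : ∀ (f₂ : α → Fin d) (j : Fin d), ∑ x with (if x ∈ P then f₁ x else f₂ x) = j, w x =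
      ∑ x ∈ P with f₁ x = j, w x + ∑ x ∈ L with f₂ x = j, w x := fun f₂ j => by
    rw [sum_filter, sum_filter, sum_filter, hP, hL, sum_filter, sum_filter, ← sum_add_distrib]
    refine sum_congr rfl fun x _ => ?_
    by_cases hx : d ^ τ ≤ w x <;> simp [hx]
  by_cases hall : ∀ j ≠ o, ∑ x ∈ P with f₁ x = j, w x = T
  · have hr : ∑ j ∈ univ.erase o, (1 / ((d : ℝ) - 1)) = 1 := by
      have h1 : (2 : ℝ) ≤ d := by exact_mod_cast hd
      have h2 : (d : ℝ) - 1 ≠ 0 := by linarith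
      rw [sum_const, card_erase_of_mem (mem_univ o), card_univ, Fintype.card_fin, nsmul_eq_mul,
        Nat.cast_sub (by omega), Nat.cast_one]
      field_simp
    refine ⟨fun x => if x ∈ P then f₁ x else o, 0, fun _ => none, P, fun _ => 1 / ((d : ℝ) - 1),
      fun _ => 0, ?_, by simp, fun x _ hx => by simp [hx], fun _ => ?_, hr, fun i => i.elim0,
      by simp, ?_⟩
    · have h1 : ∀ j ≠ o, ∑ x with (if x ∈ P then f₁ x else o) = j, w x = T := fun j hj => by
        rw [hcomb, hall j hj]
        simp [hj.symm]
      have h2 := sum_fiberwise univ (fun x => if x ∈ P then f₁ x else o) w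
      rw [hsum, ← add_sum_erase _ _ (mem_univ o),
        sum_congr rfl fun j hj => h1 j (ne_of_mem_erase hj), sum_const,
        card_erase_of_mem (mem_univ o), card_univ, Fintype.card_fin, smul_eq_mul, pow_succ', ← hT] at h2
      intro j
      by_cases hj : j = o
      · subst hj
        obtain ⟨b, rfl⟩ : ∃ b, d = b + 1 := ⟨d - 1, by omega⟩
        simp only [Nat.add_sub_cancel, add_mul, one_mul] at h2
        beta_reduce at h2 ⊢
        omega
      · exact h1 j hj
    · have : (1 : ℝ) ≤ d := by exact_mod_cast hd0
      exact one_div_nonneg.2 (by linarith)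
    · have := Nat.mul_le_mul_left D hPcard
      omega
  · have hne := hf₁'.resolve_left hall
    push Not at hall
    obtain ⟨k, hk, hkT⟩ := hall
    have hzero : ∑ x ∈ P with f₁ x = o, w x = 0 := by
      rw [filter_false_of_mem hne, sum_empty]
    have hle : ∀ j, ∑ x ∈ P with f₁ x = j, w x ≤ T := fun j => by
      by_cases hj : j = o
      · rw [hj, hzero]; exact Nat.zero_le _
      · exact hf₁ j hj
    set g : Fin d → ℕ := fun j => T - ∑ x ∈ P with f₁ x = j, w x with hg
    have hgo : g o = T := by simp only [hg, hzero, Nat.sub_zero]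
    have hgsum : ∑ x ∈ L, w x = ∑ j, g j := by
      have h1 : ∑ j, g j + ∑ j, ∑ x ∈ P with f₁ x = j, w x = d * T := by
        rw [← sum_add_distrib, sum_congr rfl fun j _ => Nat.sub_add_cancel (hle j)]
        simp
      rw [sum_fiberwise] at h1
      omega
    obtain ⟨f₂, A, lab, R, z, hf₂, hlabL, hlabw, hlabo, hz, hA, hR⟩ :=
      exists_fill_below (τ := τ) hd hD hK L w
        (fun x hx => (hw x).imp_right fun ⟨e, _, h⟩ => ⟨e, by
          have h1 := (mem_filter.1 hx).2
          rw [h, not_le] at h1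
          exact (Nat.pow_lt_pow_iff_right (by omega)).1 h1, h⟩) o g
        (fun j => Nat.dvd_sub (pow_dvd_pow _ (by omega)) (dvd_sum fun x hx => by
          obtain ⟨e, he, _, h⟩ := hPw x (mem_filter.1 hx).1
          rw [h]
          exact pow_dvd_pow _ he))
        (fun j => hgo ▸ Nat.sub_le _ _)
        (by
          rw [hgo, hT, pow_add, mul_comm (d ^ τ)]
          exact Nat.mul_le_mul_right _ hV)
        (by
          have h1 : g o + g k ≤ ∑ j, g j := by
            rw [← sum_pair hk.symm]
            exact sum_le_sum_of_subset (subset_univ _)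
          have h2 := lt_of_le_of_ne (hf₁ k hk) hkT
          have h3 : 0 < g k := Nat.sub_pos_of_lt h2
          omega)
        hgsum
    have hcount : ∀ i j, #{x | lab x = some i ∧ (if x ∈ P then f₁ x else f₂ x) = j} =
        #{x | lab x = some i ∧ f₂ x = j} := fun i j => by
      congr 1
      ext x
      simp only [mem_filter, mem_univ, true_and]
      refine and_congr_right fun hx => ?_
      have h1 := (mem_filter.1 (hlabL x i hx)).2
      simp [hP, h1]
    have hLcard : #L ≤ Fintype.card α := card_le_univ L
    have hgpos : 0 < ∑ j ∈ univ.erase o, (g j : ℝ) := by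
      have h2 := lt_of_le_of_ne (hf₁ k hk) hkT
      have h3 : 0 < g k := Nat.sub_pos_of_lt h2
      have h4 : g k ≤ ∑ j ∈ univ.erase o, g j :=
        single_le_sum (fun _ _ => Nat.zero_le _) (mem_erase.2 ⟨hk, mem_univ _⟩)
      exact_mod_cast h3.trans_le h4
    refine ⟨fun x => if x ∈ P then f₁ x else f₂ x, A, lab, P ∪ R,
      fun j => (g j : ℝ) / ∑ j ∈ univ.erase o, (g j : ℝ), z, fun j => ?_, hlabw, fun x hx hxR => ?_,
      fun j => by positivity, ?_, fun i => ?_, hA.trans hLcard, ?_⟩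
    · rw [hcomb, hf₂]
      exact Nat.add_sub_cancel' (hle j)
    · rw [mem_union, not_or] at hxR
      simp only [hxR.1, if_false]
      have hxL : x ∈ L := by
        have := hxR.1
        simp only [hP, mem_filter, mem_univ, true_and] at this
        exact mem_filter.2 ⟨mem_univ x, this⟩
      exact hlabo x hxL hx hxR.2
    · rw [← sum_div, div_self hgpos.ne']
    · simp only [hcount]
      exact hz i
    · have h1 := card_union_le P R
      have h2 := Nat.mul_le_mul_left D h1
      have h3 := Nat.mul_le_mul_left D hPcard
      rw [mul_add] at h2
      omega

/-- A `d`-adic distribution scaled to natural weights that are powers of `d`. -/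
lemma IsDadicDist.exists_weights {d n : ℕ} (hd : 2 ≤ d) {μ : Fin n → ℝ} (hμ : IsDadicDist d n μ)
    (V : ℕ) : ∃ (τ : ℕ) (w : Fin n → ℕ), (∀ x, (w x : ℝ) = (d : ℝ) ^ (τ + V + 1) * μ x) ∧
      ∀ x, w x = 0 ∨ ∃ e ≤ τ + V, w x = d ^ e := by
  have hd0 : (d : ℝ) ≠ 0 := by
    have : d ≠ 0 := by omega
    exact_mod_cast this
  have hlev : ∀ x, ∃ l : ℕ, 1 ≤ l ∧ (μ x = 0 ∨ μ x = ((d : ℝ) ^ l)⁻¹) := fun x =>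
    (hμ.2.2 x).elim (fun h => ⟨1, le_rfl, Or.inl h⟩) fun ⟨l, hl, h⟩ => ⟨l, hl, Or.inr h⟩
  choose l hl1 hl using hlev
  have hlτ : ∀ x, l x ≤ univ.sup l := fun x => le_sup (mem_univ x)
  refine ⟨univ.sup l, fun x => if μ x = 0 then 0 else d ^ (univ.sup l + V + 1 - l x),
    fun x => ?_, fun x => ?_⟩
  · by_cases hx : μ x = 0
    · simp [hx]
    · have h1 := (hl x).resolve_left hx
      have h2 := hlτ x
      simp only [hx, if_false]
      rw [h1, ← div_eq_mul_inv, eq_div_iff (pow_ne_zero _ hd0)]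
      push_cast
      rw [← pow_add]
      congr 1
      omega
  · by_cases hx : μ x = 0
    · left; simp [hx]
    · right
      have h1 := hl1 x
      exact ⟨_, by omega, if_neg hx⟩

lemma pow_mul_exp_neg_le_rhoDiv {d n D K V : ℕ} (hd : 2 ≤ d) (hD : 0 < D) (hK : 2 * d * D ≤ K)
    (hV : D * K ≤ d ^ V) {μ : Fin n → ℝ} (hμ : IsDadicDist d n μ) {p : ℝ} (hp0 : 0 < p) (hp1 : p < 1)
    (hKL : ∀ c Y : ℕ, c + Y ≤ d * c →
      p ^ (c + Y) * ((c : ℝ) ^ c * (Y : ℝ) ^ Y) ≤ ((c : ℝ) + Y) ^ (c + Y) * (p ^ c * (1 - p) ^ Y))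
    {l : ℝ} (hl : 0 < l) :
    p ^ n * Real.exp (-(n * (l + (Real.log (d / (1 - Real.exp (-l))) + d) / D +
      (d * Real.log (d / (1 - Real.exp (-l))) + 2 * d + d * Real.log D) / K) +
      d ^ (V + 1) * Real.log (d / (1 - Real.exp (-l))))) ≤ rhoDiv d n μ := by
  have hd' : (2 : ℝ) ≤ d := by exact_mod_cast hd
  have hd0 : (0 : ℝ) < d := by linarith
  have hD0 : (0 : ℝ) < D := by exact_mod_cast hD
  have hD1 : (1 : ℝ) ≤ D := by exact_mod_cast hD
  have hK0 : (0 : ℝ) < K := by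
    have h : 0 < 2 * d * D := by positivity
    exact_mod_cast h.trans_le hK
  let o : Fin d := ⟨0, by omega⟩
  obtain ⟨τ, w, hwμ, hw⟩ := hμ.exists_weights hd V
  have hsum : ∑ x, w x = d ^ (τ + V + 1) := by
    have : ((∑ x, w x : ℕ) : ℝ) = ((d ^ (τ + V + 1) : ℕ) : ℝ) := by
      push_cast
      rw [sum_congr rfl fun x _ => hwμ x, ← mul_sum, hμ.2.1, mul_one]
    exact_mod_cast this
  obtain ⟨f, A, lab, R, r, z, hf, hlab, hrest, hr0, hr1, hz, hA, hR⟩ :=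
    exists_structured_division hd hD hK hV w hw hsum o
  rw [Fintype.card_fin] at hA hR
  have hη0 : 0 < 1 - Real.exp (-l) := by
    have := Real.exp_lt_one_iff.2 (neg_lt_zero.2 hl)
    linarith
  have hη1 : 1 - Real.exp (-l) < 1 := by linarith [Real.exp_pos (-l)]
  set η := 1 - Real.exp (-l) with hη
  set ℓ := Real.log (d / η) with hℓ
  have hℓ0 : 0 ≤ ℓ := Real.log_nonneg (by rw [le_div_iff₀ hη0]; linarith)
  have hpos : (0 : ℝ) < d ^ (τ + V + 1) := by positivity
  let q : Fin d → ℝ := fun j => if j = o then p else (1 - p) * r j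
  have hqo : q o = p := if_pos rfl
  have hqj : ∀ j ≠ o, q j = (1 - p) * r j := fun j hj => if_neg hj
  have hq0 : ∀ j, 0 ≤ q j := fun j => by
    by_cases hj : j = o
    · rw [hj, hqo]; exact hp0.le
    · rw [hqj j hj]; exact mul_nonneg (by linarith) (hr0 j)
  have hq1 : ∑ j, q j = 1 := by
    rw [← add_sum_erase _ _ (mem_univ o), hqo,
      sum_congr rfl fun j hj => hqj j (ne_of_mem_erase hj), ← mul_sum, hr1]
    ring
  have hmain := pow_mul_le_rhoDiv_mul hd μ f
    (fun j => by
      have h1 : ((∑ x with f x = j, w x : ℕ) : ℝ) = ((d ^ (τ + V) : ℕ) : ℝ) := by rw [hf j]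
      push_cast at h1
      rw [sum_congr rfl fun x _ => hwμ x, ← mul_sum, pow_succ] at h1
      rw [eq_div_iff hd0.ne']
      have h2 : (d : ℝ) ^ (τ + V) ≠ 0 := by positivity
      apply mul_left_cancel₀ h2
      linarith)
    lab
    (fun x y i hx hy => by
      have h1 : (w x : ℝ) = w y := by exact_mod_cast hlab x y i hx hy
      rw [hwμ, hwμ] at h1
      exact mul_left_cancel₀ hpos.ne' h1)
    o R hrest q hq0 hq1 (hqo ▸ hp0)
    (fun i => by
      obtain ⟨hz0, hz1, hz2, hz3⟩ := hz i
      have h1 := level_bound o (fun j => #{x | lab x = some i ∧ f x = j}) q hp0 hp1 hKL hq0 hqo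
        hz0 hz1
        (fun j hj => by
          rw [hqj j hj]
          have := mul_le_mul_of_nonneg_right (hz2 j hj) (show 0 ≤ 1 - p by linarith)
          linarith)
        hz3
      have h2 : ∑ j, #{x | lab x = some i ∧ f x = j} = #{x | lab x = some i} := by
        rw [card_eq_sum_card_fiberwise (f := f) (t := univ) fun x _ => mem_univ _]
        simp only [filter_filter]
      rw [h2] at h1
      rw [hqo]
      exact h1)
    hη0 hη1
  rw [hqo] at hmain
  have hcard : (∑ i, (#{x | lab x = some i} : ℝ)) ≤ n := by
    have h1 := card_eq_sum_card_fiberwise (s := (univ : Finset (Fin n))) (f := lab) (t := univ)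
      fun x _ => mem_univ _
    rw [Fintype.sum_option, card_univ, Fintype.card_fin] at h1
    have h2 : ∑ i, #{x | lab x = some i} ≤ n := by omega
    exact_mod_cast h2
  have hfactor : ∀ m : ℕ, Real.exp (2 * d) * ((m : ℝ) + 1) ^ d ≤
      Real.exp (2 * d + d * Real.log D + d / D * m) := fun m => by
    have h1 : (m : ℝ) + 1 ≤ D * Real.exp (m / D) := by
      have h2 := Real.add_one_le_exp ((m : ℝ) / D)
      calc (m : ℝ) + 1 ≤ m + D := by linarith
        _ = D * (m / D + 1) := by field_simp
        _ ≤ _ := by gcongr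
    calc Real.exp (2 * d) * ((m : ℝ) + 1) ^ d ≤ Real.exp (2 * d) * (D * Real.exp (m / D)) ^ d := by
          gcongr
      _ = _ := by
        rw [mul_pow, ← Real.exp_nat_mul, ← Real.exp_log hD0, ← Real.exp_nat_mul, ← Real.exp_add,
          ← Real.exp_add, Real.exp_log hD0]
        congr 1
        ring
  have hW : ∏ i, (Real.exp (2 * d) * ((#{x | lab x = some i} : ℝ) + 1) ^ d) ≤
      Real.exp (A * (2 * d + d * Real.log D) + d / D * n) := by
    calc _ ≤ ∏ i : Fin A, Real.exp (2 * d + d * Real.log D + d / D * #{x | lab x = some i}) :=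
          prod_le_prod (fun _ _ => by positivity) fun i _ => hfactor _
      _ = Real.exp (A * (2 * d + d * Real.log D) + d / D * ∑ i, (#{x | lab x = some i} : ℝ)) := by
          rw [← Real.exp_sum, sum_add_distrib, ← mul_sum]
          simp [mul_add]
      _ ≤ _ := by gcongr
  have hWpos : 0 < ∏ i, (Real.exp (2 * d) * ((#{x | lab x = some i} : ℝ) + 1) ^ d) :=
    prod_pos fun _ _ => by positivity
  set W := ∏ i, (Real.exp (2 * d) * ((#{x | lab x = some i} : ℝ) + 1) ^ d)
  have hAK : (A : ℝ) ≤ n / K := by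
    rw [le_div_iff₀ hK0]
    exact_mod_cast hA
  have hRb : (#R : ℝ) ≤ d ^ (V + 1) + n / D + d * (n / K) := by
    have h1 : (D : ℝ) * #R ≤ D * d ^ (V + 1) + n + d * D * A := by exact_mod_cast hR
    have h2 : (#R : ℝ) ≤ d ^ (V + 1) + n / D + d * A := by
      refine le_of_mul_le_mul_left (h1.trans (le_of_eq ?_)) hD0
      field_simp
    refine h2.trans ?_
    gcongr
  have hηpow : (1 - η) ^ n * (η / d) ^ #R = Real.exp (-(n * l + #R * ℓ)) := by
    have h1 : 1 - η = Real.exp (-l) := by rw [hη]; ring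
    have h2 : η / d = Real.exp (-ℓ) := by
      rw [hℓ, ← Real.log_inv, Real.exp_log (by positivity), inv_div]
    rw [h1, h2, ← Real.exp_nat_mul, ← Real.exp_nat_mul, ← Real.exp_add]
    congr 1
    ring
  rw [hηpow] at hmain
  refine le_of_mul_le_mul_right (le_trans ?_ hmain) hWpos
  rw [mul_assoc]
  refine mul_le_mul_of_nonneg_left ?_ (by positivity)
  refine (mul_le_mul_of_nonneg_left hW (Real.exp_pos _).le).trans ?_
  rw [← Real.exp_add, Real.exp_le_exp]
  have hlogD : 0 ≤ Real.log D := Real.log_nonneg hD1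
  have h1 := mul_le_mul_of_nonneg_right hRb hℓ0
  have h2 := mul_le_mul_of_nonneg_right hAK (show 0 ≤ 2 * d + d * Real.log D by positivity)
  have h3 : (n : ℝ) * (l + (ℓ + d) / D + (d * ℓ + 2 * d + d * Real.log D) / K) =
      n * l + n / D * ℓ + d / D * n + d * (n / K) * ℓ + n / K * (2 * d + d * Real.log D) := by ring
  rw [h3]
  linarith

end EquitableDivision

/-- Lower bound: for `n` large, every non-constant `d`-adic distribution `μ` on `X_n`
satisfies `ρ(Div(μ)) ≥ 2^{(f_d(β)−ε)n}` for some `β ∈ (0, 1/(d−1)]`. -/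
theorem rhoDiv_lower (d : ℕ) (hd : 2 ≤ d) :
    ∀ ε > (0 : ℝ), ∃ N : ℕ, ∀ n : ℕ, N ≤ n →
      ∀ μ : Fin n → ℝ, IsDadicDist d n μ → (∃ i j, μ i ≠ μ j) →
        ∃ β : ℝ, 0 < β ∧ β ≤ 1 / ((d : ℝ) - 1) ∧
          (2 : ℝ) ^ ((fdFun d β - ε) * n) ≤ rhoDiv d n μ := by
  intro ε hε
  obtain ⟨β, p, hβ0, hβ1, hp0, hp1, hfd, hKL⟩ := exists_beta hd
  have hlog2 : 0 < Real.log 2 := Real.log_pos one_lt_two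
  set l := ε * Real.log 2 / 4 with hl
  have hl0 : 0 < l := by positivity
  set ℓ := Real.log (d / (1 - Real.exp (-l)))
  obtain ⟨D, hD⟩ := exists_nat_ge ((ℓ + d) / l + 1)
  have hℓ0 : 0 ≤ ℓ := by
    have h1 := Real.exp_lt_one_iff.2 (neg_lt_zero.2 hl0)
    have h2 := Real.exp_pos (-l)
    have h3 : (2 : ℝ) ≤ d := by exact_mod_cast hd
    exact Real.log_nonneg (by rw [le_div_iff₀ (by linarith)]; linarith)
  have hD1 : (1 : ℝ) ≤ D := le_trans (by linarith [show 0 ≤ (ℓ + d) / l by positivity]) hD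
  have hD0 : 0 < D := by exact_mod_cast zero_lt_one.trans_le hD1
  have hlogD : 0 ≤ Real.log D := Real.log_nonneg hD1
  obtain ⟨K', hK'⟩ := exists_nat_ge ((d * ℓ + 2 * d + d * Real.log D) / l)
  set K := K' + 2 * d * D with hK
  have hK0 : (0 : ℝ) < K := by
    have : 0 < 2 * d * D := by positivity
    exact_mod_cast (show 0 < K by omega)
  set V := D * K
  have hV : D * K ≤ d ^ V := (Nat.lt_pow_self (by omega)).le
  obtain ⟨N, hN⟩ := exists_nat_ge (d ^ (V + 1) * ℓ / l)
  refine ⟨N, fun n hn μ hμ _ => ⟨β, hβ0, hβ1, ?_⟩⟩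
  refine le_trans ?_ (pow_mul_exp_neg_le_rhoDiv hd hD0 (by omega) hV hμ hp0 hp1 hKL hl0)
  have hp : p ^ n = Real.exp (Real.log p * n) := by
    rw [← Real.rpow_natCast, Real.rpow_def_of_pos hp0]
  rw [hp, ← Real.exp_add, Real.rpow_def_of_pos two_pos, Real.exp_le_exp, hfd]
  have h1 : Real.log 2 * ((Real.logb 2 p - ε) * n) = Real.log p * n - n * (4 * l) := by
    rw [Real.logb, hl]
    field_simp
  rw [h1]
  have h2 : (ℓ + d) / D ≤ l := by
    rw [div_le_iff₀ (by linarith), ← div_le_iff₀' hl0]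
    linarith
  have h3 : (d * ℓ + 2 * d + d * Real.log D) / K ≤ l := by
    rw [div_le_iff₀ hK0, ← div_le_iff₀' hl0]
    refine hK'.trans ?_
    exact_mod_cast (show K' ≤ K by omega)
  have h4 : (d : ℝ) ^ (V + 1) * ℓ ≤ n * l := by
    rw [← div_le_iff₀ hl0]
    exact hN.trans (by exact_mod_cast hn)
  have h5 : (n : ℝ) * (l + (ℓ + d) / D + (d * ℓ + 2 * d + d * Real.log D) / K) ≤ n * (3 * l) := by
    gcongr
    linarith
  linarith
end
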